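/- Let G be a finite non-solvable group such that the number i₂(G) of elements of G of order 2 satisfies i₂(G) ≤ (10/99)·|G|. Then o(G) > 34479/10000. -/

import Mathlib

/-- The average element order `o(G) = ψ(G)/|G|` of a finite group `G`,
where `ψ(G) = ∑_{x ∈ G} |x|` is the sum of the orders of all elements of `G`. -/
noncomputable def avgOrder (G : Type*) [Group G] [Fintype G] : ℚ :=
  (∑ x : G, (orderOf x : ℚ)) / (Fintype.card G : ℚ)

/-- `i₂(G)`: the number of elements of order exactly 2 in `G`. -/
noncomputable def numOrderTwo (G : Type*) [Group G] [Fintype G] : ℕ :=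
  (Finset.univ.filter fun g : G => orderOf g = 2).card

/-!
Assume `o(G) ≤ 34479/10000`. Weighting an element of order `n` by `4 - n`, lowered by `c` for
involutions, turns the hypotheses into lower bounds for `4|G| - ψ(G) - c i₂(G)` with `c = 1, 2`.
With these weights only `1`, the elements of order `3` and, for `c = 1`, the involutions count
positively, so `G` is rich in elements of order `3`. Both bounds pass to quotients, and to `O³(G)`
unless `O³(G)` is solvable: if more than `47/60` of a coset `O³(G) x ≠ O³(G)` has order `3`, then in
`⟨O³(G), x⟩` transfer forces a self-normalizing Sylow `3`-subgroup of order `3`, so the whole coset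
has exponent `3`, and then conjugates in `O³(G)` commute. Hence we may assume `O³(G) = G` and that
`G` has no nontrivial solvable normal subgroup.

Let `P` be one of the `n` Sylow `3`-subgroups. If `|N(P) : P| ≥ 3`, the at most `n(|P| - 1)`
elements of order `3` are too few. If `N(P) = P`, transfer puts the elements of order `3` lying in
`P` alone into `[P, P]`; all others lie in at least four Sylow `3`-subgroups, and again there are
too few. If `|N(P) : P| = 2` and `|P| = 3`, all orders are at most `4`, so a Sylow `2`-subgroup has
index `3` and trivial core, and `|G| ≤ 3!`. In the remaining case, counting the elements of order
`3` whose centralizer is a `3`-group yields a plane `𝔽₃ × 𝔽₃` in `P`, containing a central `z` of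
order `3`, whose vectors outside `⟨z⟩` lie in no other Sylow `3`-subgroup and have `3`-groups as
centralizers. Commutation identities between conjugates limit the cube roots of `1` in a coset
`g𝔽₃²` with `g ∉ N(P)`: together with the involutions they number at most `3`, plus `2` for each
coset of `⟨z⟩` consisting of cube roots of `1`. The latter are bounded by the number of Sylow
`3`-subgroups containing `z`, which is at most `n / 4`, and summing over `g` contradicts the bound
for `c = 1`.
-/

open Subgroup

section PElements

variable {G : Type*} [Group G] {p : ℕ}

/-- `x` is a `p`-element: its order is a power of `p`. -/
def IsPElement (p : ℕ) (x : G) : Prop := ∃ k : ℕ, x ^ p ^ k = 1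

theorem IsPElement.of_pow_eq_one {x : G} (hx : x ^ p = 1) : IsPElement p x :=
  ⟨1, by rwa [pow_one]⟩

theorem IsPElement.of_pow {x : G} (hx : IsPElement p (x ^ p)) : IsPElement p x := by
  obtain ⟨k, hk⟩ := hx
  exact ⟨k + 1, by rwa [pow_succ', pow_mul]⟩

theorem IsPElement.inv {x : G} (hx : IsPElement p x) : IsPElement p x⁻¹ := by
  obtain ⟨k, hk⟩ := hx
  exact ⟨k, by rw [inv_pow, hk, inv_one]⟩

theorem IsPElement.conj {x : G} (hx : IsPElement p x) (g : G) : IsPElement p (g * x * g⁻¹) := by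
  obtain ⟨k, hk⟩ := hx
  exact ⟨k, by rw [conj_pow, hk, mul_one, mul_inv_cancel]⟩

theorem IsPElement.mul {x y : G} (hx : IsPElement p x) (hy : IsPElement p y)
    (hxy : Commute x y) : IsPElement p (x * y) := by
  obtain ⟨k, hk⟩ := hx
  obtain ⟨l, hl⟩ := hy
  refine ⟨k + l, ?_⟩
  rw [hxy.mul_pow, pow_add, pow_mul, hk, one_pow, mul_comm, pow_mul, hl, one_pow, one_mul]

theorem isPGroup_iff_forall_isPElement {H : Subgroup G} :
    IsPGroup p H ↔ ∀ x ∈ H, IsPElement p x := by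
  simp only [IsPGroup, IsPElement, Subtype.forall, SubmonoidClass.mk_pow, mk_eq_one]

theorem isPGroup_closure_of_commute {s : Set G} (hcomm : ∀ x ∈ s, ∀ y ∈ s, Commute x y)
    (hs : ∀ x ∈ s, IsPElement p x) : IsPGroup p (closure s) := by
  have := isMulCommutative_closure hcomm
  rw [isPGroup_iff_forall_isPElement]
  intro x hx
  induction hx using closure_induction with
  | mem x hx => exact hs x hx
  | one => exact ⟨0, one_pow _⟩
  | mul x y hx hy ihx ihy => exact ihx.mul ihy (setLike_mul_comm hx hy)
  | inv x _ ih => exact ih.inv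

theorem isPGroup_closure_pair {x y : G} (hxy : Commute x y) (hx : IsPElement p x)
    (hy : IsPElement p y) : IsPGroup p (closure {x, y}) := by
  apply isPGroup_closure_of_commute
  · rintro a (rfl | rfl) b (rfl | rfl)
    exacts [.refl _, hxy, hxy.symm, .refl _]
  · rintro a (rfl | rfl) <;> assumption

theorem IsPElement.isPGroup_zpowers {x : G} (hx : IsPElement p x) : IsPGroup p (zpowers x) := by
  rw [zpowers_eq_closure, ← Set.pair_eq_singleton]
  exact isPGroup_closure_pair (.refl x) hx hx

theorem exists_isPGroup_of_commute_conj {E : Subgroup G} (hE : IsPGroup p E) {w : G}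
    (hw : IsPElement p w) (hcomm : ∀ x ∈ E, Commute w (x * w * x⁻¹)) :
    ∃ H : Subgroup G, IsPGroup p H ∧ E ≤ H ∧ w ∈ H := by
  set s : Set G := {y | ∃ x ∈ E, x * w * x⁻¹ = y}
  have hs : IsPGroup p (closure s) := by
    apply isPGroup_closure_of_commute
    · rintro _ ⟨x, hx, rfl⟩ _ ⟨y, hy, rfl⟩
      rw [← Commute.conj_iff x⁻¹]
      convert hcomm (x⁻¹ * y) (mul_mem (inv_mem hx) hy) using 1 <;> group
    · rintro _ ⟨x, -, rfl⟩
      exact hw.conj x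
  have hnorm : E ≤ normalizer (closure s : Set G) := by
    rw [le_normalizer_closure_iff]
    rintro y hy _ ⟨x, hx, rfl⟩
    exact subset_closure ⟨y * x, mul_mem hy hx, by group⟩
  exact ⟨E ⊔ closure s, hE.to_sup_of_normal_right' hs hnorm, le_sup_left,
    mem_sup_right (subset_closure ⟨1, one_mem E, by group⟩)⟩

theorem exists_zpow_mul_zpow_of_mem_closure_pair {x y g : G} (hxy : Commute x y)
    (hg : g ∈ closure {x, y}) : ∃ i j : ℤ, g = x ^ i * y ^ j := by
  let φ := (zpowersHom G x).noncommCoprod (zpowersHom G y) fun i j => hxy.zpow_zpow i.toAdd j.toAdd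
  have hle : closure {x, y} ≤ φ.range := by
    rw [closure_le]
    rintro g (rfl | rfl)
    · exact ⟨(.ofAdd 1, 1), (by simp : g ^ (1 : ℤ) * y ^ (0 : ℤ) = g)⟩
    · exact ⟨(1, .ofAdd 1), (by simp : x ^ (0 : ℤ) * g ^ (1 : ℤ) = g)⟩
  obtain ⟨⟨i, j⟩, rfl⟩ := hle hg
  exact ⟨i.toAdd, j.toAdd, rfl⟩

theorem exists_zpow_mul_zpow_isPElement [Finite G] [Fact p.Prime] (w : G) (k : ℕ) :
    ∃ a c : ℤ, w = w ^ a * (w ^ p ^ k) ^ c ∧ IsPElement p (w ^ a) := by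
  obtain ⟨l, m, hm, hord⟩ :=
    Nat.exists_eq_pow_mul_and_not_dvd (orderOf_pos w).ne' p (Fact.out : p.Prime).ne_one
  have hcop : IsCoprime (m : ℤ) ((p ^ k : ℕ) : ℤ) :=
    Nat.isCoprime_iff_coprime.mpr
      (((Fact.out : p.Prime).coprime_iff_not_dvd.mpr hm).symm.pow_right k)
  obtain ⟨a, c, hac⟩ := hcop
  refine ⟨a * m, c, ?_, l, ?_⟩
  · rw [← zpow_natCast w, ← zpow_mul, ← zpow_add, mul_comm _ c, hac, zpow_one]
  · rw [← zpow_natCast, ← zpow_mul, mul_assoc, ← Nat.cast_mul, mul_comm m, ← hord, mul_comm,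
      zpow_mul, zpow_natCast, pow_orderOf_eq_one, one_zpow]

end PElements

section CubeIdentities

variable {G : Type*} [Group G]

theorem conj_conj_of_pow_three_eq_one {b : G} (hb : b ^ 3 = 1) (w : G) :
    b * (b * w * b⁻¹) * b⁻¹ = b⁻¹ * w * b := by
  have hinv : b * b = b⁻¹ := eq_inv_of_mul_eq_one_left (by rw [← pow_three', hb])
  calc b * (b * w * b⁻¹) * b⁻¹ = b * b * w * (b * b)⁻¹ := by group
    _ = b⁻¹ * w * b := by rw [hinv, inv_inv]

theorem zpow_eq_of_pow_three_eq_one {b : G} (hb : b ^ 3 = 1) (i : ℤ) :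
    b ^ i = 1 ∨ b ^ i = b ∨ b ^ i = b⁻¹ := by
  have hmod : b ^ i = b ^ (i % 3) := by
    conv_lhs => rw [← Int.emod_add_mul_ediv i 3, zpow_add, zpow_mul, zpow_ofNat, hb, one_zpow,
      mul_one]
  have hcases : i % 3 = 0 ∨ i % 3 = 1 ∨ i % 3 = 2 := by omega
  rcases hcases with h | h | h <;> rw [hmod, h]
  · exact .inl (zpow_zero b)
  · exact .inr (.inl (zpow_one b))
  · exact .inr (.inr (eq_inv_of_mul_eq_one_left (by rw [zpow_ofNat, ← pow_succ, hb])))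

/-- `w` is flanked in the direction `b`: the points `w * b` and `w * b⁻¹` next to `w` on the
affine line `w * ⟨b⟩` of three points have trivial cube. -/
structure CubeFlanked (w b : G) : Prop where
  dir : b ^ 3 = 1
  right : (w * b) ^ 3 = 1
  left : (w * b⁻¹) ^ 3 = 1

/-- The product of the conjugates of `w` under `⟨b⟩`, for `b` of order dividing `3`. -/
def conjNorm (w b : G) : G := w * (b * w * b⁻¹) * (b⁻¹ * w * b)

namespace CubeFlanked

variable {w b e f : G}

theorem inv (h : CubeFlanked w b) : CubeFlanked w b⁻¹ :=
  ⟨by rw [inv_pow, h.dir, inv_one], h.left, by rw [inv_inv]; exact h.right⟩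

theorem conjNorm_eq_one (h : CubeFlanked w b) : conjNorm w b = 1 := by
  calc w * (b * w * b⁻¹) * (b⁻¹ * w * b) = w * b * w * (b⁻¹ * b⁻¹ * w * b) := by group
    _ = w * b * w * (b ^ 3 * (b⁻¹ * b⁻¹) * w * b) := by rw [h.dir, one_mul]
    _ = (w * b) ^ 3 := by rw [pow_three, pow_three]; group
    _ = 1 := h.right

theorem commute_conj_conj (h : CubeFlanked w b) : Commute (b * w * b⁻¹) (b⁻¹ * w * b) := by
  have h₁ := h.conjNorm_eq_one
  have h₂ := h.inv.conjNorm_eq_one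
  rw [conjNorm, mul_assoc] at h₁ h₂
  rw [inv_inv] at h₂
  exact (inv_eq_of_mul_eq_one_right h₁).symm.trans (inv_eq_of_mul_eq_one_right h₂)

theorem commute_conj (h : CubeFlanked w b) : Commute w (b * w * b⁻¹) := by
  have hw : w = ((b * w * b⁻¹) * (b⁻¹ * w * b))⁻¹ :=
    eq_inv_of_mul_eq_one_left (by rw [← mul_assoc]; exact h.conjNorm_eq_one)
  conv_lhs => rw [hw]
  exact ((Commute.refl _).mul_left h.commute_conj_conj.symm).inv_left

theorem commute_conj_of_mem_zpowers (h : CubeFlanked w b) {x : G}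
    (hx : x ∈ zpowers b) : Commute w (x * w * x⁻¹) := by
  obtain ⟨i, rfl⟩ := mem_zpowers_iff.mp hx
  rcases zpow_eq_of_pow_three_eq_one h.dir i with hi | hi | hi <;> rw [hi]
  · simp
  · exact h.commute_conj
  · exact h.inv.commute_conj

theorem exists_isPGroup (h : CubeFlanked w b) (hw : w ^ 3 = 1) :
    ∃ H : Subgroup G, IsPGroup 3 H ∧ w ∈ H ∧ b ∈ H := by
  obtain ⟨H, hH, hb, hwH⟩ := exists_isPGroup_of_commute_conj
    (IsPElement.of_pow_eq_one h.dir).isPGroup_zpowers (IsPElement.of_pow_eq_one hw)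
    fun _ => h.commute_conj_of_mem_zpowers
  exact ⟨H, hH, hwH, hb (mem_zpowers b)⟩

end CubeFlanked

-- The nine elements `φⁱ ψʲ w` form a grid whose rows and columns commute and have product `1`;
-- evaluating `φ² ψ² w` along the last row and along the last column gives the claim.
theorem commute_map_map_of_commuting {φ ψ : MulAut G} (hφψ : ∀ x, φ (ψ x) = ψ (φ x)) {w : G}
    (hφ : w * φ w * φ (φ w) = 1) (hψ : w * ψ w * ψ (ψ w) = 1)
    (hwφ : Commute w (φ w)) (hwψ : Commute w (ψ w)) : Commute (φ w) (ψ w) := by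
  have hφφ : φ (φ w) = (w * φ w)⁻¹ := eq_inv_of_mul_eq_one_right hφ
  have hψψ : ψ (ψ w) = (w * ψ w)⁻¹ := eq_inv_of_mul_eq_one_right hψ
  have hrow : Commute (ψ w) (ψ (φ w)) := hwφ.map ψ
  have hcol : Commute (φ w) (ψ (φ w)) := hφψ w ▸ hwψ.map φ
  have hcorner : (ψ w * ψ (φ w)) * (w * φ w) = (φ w * ψ (φ w)) * (w * ψ w) := by
    have h : φ (φ (ψ (ψ w))) = ψ (ψ (φ (φ w))) := by simp only [hφψ]
    have hφφψ : φ (φ (ψ w)) = (ψ w * ψ (φ w))⁻¹ := by rw [hφψ, hφψ, hφφ, map_inv, map_mul]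
    have hψψφ : ψ (ψ (φ w)) = (φ w * ψ (φ w))⁻¹ := by
      rw [← hφψ, ← hφψ, hψψ, map_inv, map_mul, hφψ]
    simpa only [hφφ, hψψ, map_inv, map_mul, hφφψ, hψψφ, mul_inv_rev, inv_inv, mul_assoc] using h
  have hswap : ψ (φ w) * (ψ w * φ w) * w = ψ (φ w) * (φ w * ψ w) * w := by
    calc ψ (φ w) * (ψ w * φ w) * w = (ψ (φ w) * ψ w) * (φ w * w) := by group
      _ = (ψ w * ψ (φ w)) * (w * φ w) := by rw [hrow.eq, hwφ.eq]
      _ = (φ w * ψ (φ w)) * (w * ψ w) := hcorner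
      _ = (ψ (φ w) * φ w) * (ψ w * w) := by rw [hcol.eq, hwψ.eq]
      _ = ψ (φ w) * (φ w * ψ w) * w := by group
  exact (mul_left_cancel (mul_right_cancel hswap)).symm

namespace CubeFlanked

variable {w e f : G}

theorem commute_conj_of_commute_dirs (he : CubeFlanked w e) (hf : CubeFlanked w f)
    (hef : Commute e f) : Commute w ((e⁻¹ * f) * w * (e⁻¹ * f)⁻¹) := by
  have hconj : Commute (e * w * e⁻¹) (f * w * f⁻¹) := by
    refine commute_map_map_of_commuting (φ := MulAut.conj e) (ψ := MulAut.conj f) (fun x => ?_)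
      ?_ ?_ he.commute_conj hf.commute_conj
    · rw [← MulAut.mul_apply, ← map_mul, hef.eq, map_mul, MulAut.mul_apply]
    · simp only [MulAut.conj_apply]
      rw [conj_conj_of_pow_three_eq_one he.dir]
      exact he.conjNorm_eq_one
    · simp only [MulAut.conj_apply]
      rw [conj_conj_of_pow_three_eq_one hf.dir]
      exact hf.conjNorm_eq_one
  rw [← Commute.conj_iff e]
  convert hconj using 1
  group

theorem commute_conj_of_mem_closure (he : CubeFlanked w e) (hf : CubeFlanked w f)
    (hef : Commute e f) {x : G} (hx : x ∈ closure {e, f}) : Commute w (x * w * x⁻¹) := by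
  obtain ⟨i, j, rfl⟩ := exists_zpow_mul_zpow_of_mem_closure_pair hef hx
  rcases zpow_eq_of_pow_three_eq_one he.dir i with hi | hi | hi <;>
    rcases zpow_eq_of_pow_three_eq_one hf.dir j with hj | hj | hj <;>
    rw [hi, hj]
  · simp
  · simpa using hf.commute_conj
  · simpa using hf.inv.commute_conj
  · simpa using he.commute_conj
  · simpa using he.inv.commute_conj_of_commute_dirs hf hef.inv_left
  · simpa using he.inv.commute_conj_of_commute_dirs hf.inv hef.inv_left.inv_right
  · simpa using he.inv.commute_conj
  · exact he.commute_conj_of_commute_dirs hf hef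
  · exact he.commute_conj_of_commute_dirs hf.inv hef.inv_right

theorem commute_conj_conj_of_mem_closure (he : CubeFlanked w e) (hf : CubeFlanked w f)
    (hef : Commute e f) {x y : G} (hx : x ∈ closure {e, f}) (hy : y ∈ closure {e, f}) :
    Commute (x * w * x⁻¹) (y * w * y⁻¹) := by
  rw [← Commute.conj_iff x⁻¹]
  convert he.commute_conj_of_mem_closure hf hef (mul_mem (inv_mem hx) hy) using 1 <;> group

end CubeFlanked

theorem commute_conjNorm_self {w b : G} (hb : b ^ 3 = 1) (h₁ : Commute w (b * w * b⁻¹))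
    (h₂ : Commute w (b⁻¹ * w * b)) : Commute (conjNorm w b) b := by
  have hfix : b * conjNorm w b * b⁻¹ = conjNorm w b := by
    calc b * conjNorm w b * b⁻¹
        = (b * w * b⁻¹) * (b * (b * w * b⁻¹) * b⁻¹) * w := by rw [conjNorm]; group
      _ = (b * w * b⁻¹) * (b⁻¹ * w * b) * w := by rw [conj_conj_of_pow_three_eq_one hb]
      _ = w * ((b * w * b⁻¹) * (b⁻¹ * w * b)) := (h₁.mul_right h₂).eq.symm
      _ = conjNorm w b := (mul_assoc ..).symm
  exact (mul_inv_eq_iff_eq_mul.mp hfix).symm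

namespace CubeFlanked

variable {w b e f : G}

theorem commute_conjNorm_of_mem_closure (he : CubeFlanked w e) (hf : CubeFlanked w f)
    (hef : Commute e f) {x : G} (hx : x ∈ closure {e, f}) (hx₃ : x ^ 3 = 1) :
    Commute (conjNorm w x) x :=
  commute_conjNorm_self hx₃ (he.commute_conj_of_mem_closure hf hef hx)
    (by simpa using he.commute_conj_of_mem_closure hf hef (inv_mem hx))

theorem commute_conjNorm_conjNorm (he : CubeFlanked w e) (hf : CubeFlanked w f)
    (hef : Commute e f) {x y : G} (hx : x ∈ closure {e, f}) (hy : y ∈ closure {e, f}) :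
    Commute (conjNorm w x) (conjNorm w y) := by
  have hconj : ∀ a ∈ closure {e, f}, Commute (a * w * a⁻¹) (conjNorm w y) := fun a ha =>
    ((he.commute_conj_of_mem_closure hf hef ha).symm.mul_right
      (he.commute_conj_conj_of_mem_closure hf hef ha hy)).mul_right
      (by simpa using he.commute_conj_conj_of_mem_closure hf hef ha (inv_mem hy))
  exact (Commute.mul_left (by simpa using hconj 1 (one_mem _)) (hconj x hx)).mul_left
    (by simpa using hconj x⁻¹ (inv_mem hx))

theorem conj_mul_mul_conj_mul_inv (h : CubeFlanked w b) (x : G) :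
    (x * b) * w * (x * b)⁻¹ * ((x * b⁻¹) * w * (x * b⁻¹)⁻¹) = (x * w * x⁻¹)⁻¹ := by
  apply eq_inv_of_mul_eq_one_right
  calc _ = x * conjNorm w b * x⁻¹ := by rw [conjNorm]; group
    _ = 1 := by rw [h.conjNorm_eq_one]; group

theorem inv_conj_mul_inv_conj_inv (h : CubeFlanked w b) :
    (b * w * b⁻¹)⁻¹ * (b⁻¹ * w * b⁻¹⁻¹)⁻¹ = w := by
  rw [inv_inv, ← mul_inv_rev, ← h.commute_conj_conj.eq]
  exact (eq_inv_of_mul_eq_one_left ((mul_assoc ..).symm.trans h.conjNorm_eq_one)).symm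

-- The two norms run over the two diagonals through `w` of the grid of conjugates of `w`; off `w`
-- these diagonals cover the same points as the two outer columns minus their middle points.
theorem pow_three_eq_conjNorm_mul_conjNorm (he : CubeFlanked w e) (hf : CubeFlanked w f)
    (hef : Commute e f) : w ^ 3 = conjNorm w (e * f⁻¹) * conjNorm w (e * f) := by
  have heE : e ∈ closure {e, f} := subset_closure (.inl rfl)
  have hfE : f ∈ closure {e, f} := subset_closure (.inr rfl)
  have hef₁ : e * f⁻¹ ∈ closure {e, f} := mul_mem heE (inv_mem hfE)
  have hef₂ : e * f ∈ closure {e, f} := mul_mem heE hfE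
  have hw {x} := he.commute_conj_of_mem_closure hf hef (x := x)
  have hcc {x y} := he.commute_conj_conj_of_mem_closure hf hef (x := x) (y := y)
  have hinv₁ : (e * f⁻¹)⁻¹ = e⁻¹ * f := by rw [mul_inv_rev, inv_inv, hef.inv_left.eq]
  have hinv₂ : (e * f)⁻¹ = e⁻¹ * f⁻¹ := by rw [mul_inv_rev, hef.inv_inv.eq]
  have hnorm (x : G) : conjNorm w x = w * (x * w * x⁻¹) * (x⁻¹ * w * x⁻¹⁻¹) := by
    rw [conjNorm, inv_inv]
  have hwA := hw hef₁
  have hwB := hw (inv_mem hef₁)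
  have hAC := hcc hef₁ hef₂
  have hBC := hcc (inv_mem hef₁) hef₂
  rw [hnorm, hnorm]
  have hCA := hf.conj_mul_mul_conj_mul_inv e
  have hBD := hf.conj_mul_mul_conj_mul_inv e⁻¹
  rw [← hinv₁, ← hinv₂] at hBD
  generalize (e * f⁻¹) * w * (e * f⁻¹)⁻¹ = A at *
  generalize (e * f⁻¹)⁻¹ * w * (e * f⁻¹)⁻¹⁻¹ = B at *
  generalize (e * f) * w * (e * f)⁻¹ = C at *
  generalize (e * f)⁻¹ * w * (e * f)⁻¹⁻¹ = D at *
  symm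
  calc w * A * B * (w * C * D) = w * A * (B * w) * C * D := by group
    _ = w * (A * w) * (B * C) * D := by rw [← hwB.eq]; group
    _ = w * w * (A * C) * (B * D) := by rw [← hwA.eq, hBC.eq]; group
    _ = w * w * ((C * A) * (B * D)) := by rw [hAC.eq]; group
    _ = w ^ 3 := by rw [hCA, hBD, he.inv_conj_mul_inv_conj_inv, pow_three, mul_assoc]

end CubeFlanked

end CubeIdentities

section Isolated

variable {G : Type*} [Group G] {p : ℕ}

/-- `y` lies in the Sylow subgroup `P` and in no other Sylow `p`-subgroup. -/
structure IsolatedIn (P : Sylow p G) (y : G) : Prop where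
  mem : y ∈ P
  eq_of_mem : ∀ Q : Sylow p G, y ∈ Q → Q = P

/-- The centralizer of `y` is a `p`-group. -/
def HasPCentralizer (p : ℕ) (y : G) : Prop := IsPGroup p (centralizer {y})

namespace HasPCentralizer

variable {x y : G}

theorem isPElement_of_commute (h : HasPCentralizer p y) (hxy : Commute x y) : IsPElement p x :=
  isPGroup_iff_forall_isPElement.mp h x (mem_centralizer_singleton_iff.mpr hxy.eq)

theorem of_forall (h : ∀ x, Commute x y → IsPElement p x) : HasPCentralizer p y :=
  isPGroup_iff_forall_isPElement.mpr fun x hx => h x (mem_centralizer_singleton_iff.mp hx)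

protected theorem inv (h : HasPCentralizer p y) : HasPCentralizer p y⁻¹ :=
  of_forall fun _ hx => h.isPElement_of_commute (Commute.inv_right_iff.mp hx)

end HasPCentralizer

namespace IsolatedIn

variable {P : Sylow p G} {y : G}

protected theorem inv (h : IsolatedIn P y) : IsolatedIn P y⁻¹ :=
  ⟨inv_mem h.mem, fun Q hQ => h.eq_of_mem Q (inv_mem_iff.mp hQ)⟩

theorem le (h : IsolatedIn P y) {H : Subgroup G} (hH : IsPGroup p H) (hy : y ∈ H) : H ≤ P := by
  obtain ⟨Q, hQ⟩ := hH.exists_le_sylow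
  exact h.eq_of_mem Q (hQ hy) ▸ hQ

end IsolatedIn

theorem smul_sylow_eq_of_mem (P : Sylow p G) {g : G} (hg : g ∈ P) : g • P = P :=
  Sylow.smul_eq_iff_mem_normalizer.mpr (le_normalizer hg)

theorem mem_smul_sylow_iff {P : Sylow p G} {g x : G} : x ∈ g • P ↔ g⁻¹ * x * g ∈ P := by
  rw [← SetLike.mem_coe, Sylow.coe_smul, Set.mem_smul_set_iff_inv_smul_mem]
  simp [MulAut.smul_def, ← map_inv]

end Isolated

namespace CubeFlanked

variable {G : Type*} [Group G] {P : Sylow 3 G} {w e f : G}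

theorem mem_of_isolatedIn (h : CubeFlanked w f) (hw : w ^ 3 = 1) (hf : IsolatedIn P f) :
    w ∈ P := by
  obtain ⟨H, hH, hwH, hfH⟩ := h.exists_isPGroup hw
  exact hf.le hH hfH hwH

theorem zpow_mem_of_isolatedIn (he : CubeFlanked w e) (hf : CubeFlanked w f) (hef : Commute e f)
    (hfP : IsolatedIn P f) {a : ℤ} (hw : IsPElement 3 (w ^ a)) : w ^ a ∈ P := by
  have hE : IsPGroup 3 (closure {e, f}) :=
    isPGroup_closure_pair hef (.of_pow_eq_one he.dir) (.of_pow_eq_one hf.dir)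
  obtain ⟨H, hH, hEH, hwH⟩ := exists_isPGroup_of_commute_conj hE hw fun x hx => by
    rw [← conj_zpow]
    exact (he.commute_conj_of_mem_closure hf hef hx).zpow_zpow a a
  exact hfP.le hH (hEH (subset_closure (.inr rfl))) hwH

theorem commute_conjNorm_mul_inv (he : CubeFlanked w e) (hf : CubeFlanked w f)
    (hef : Commute e f) : Commute (conjNorm w (e * f⁻¹)) (e * f⁻¹) :=
  he.commute_conjNorm_of_mem_closure hf hef
    (mul_mem (subset_closure (.inl rfl)) (inv_mem (subset_closure (.inr rfl))))
    (by rw [hef.inv_right.mul_pow, he.dir, inv_pow, hf.dir, inv_one, one_mul])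

theorem commute_conjNorm_mul (he : CubeFlanked w e) (hf : CubeFlanked w f)
    (hef : Commute e f) : Commute (conjNorm w (e * f)) (e * f) :=
  he.commute_conjNorm_of_mem_closure hf hef
    (mul_mem (subset_closure (.inl rfl)) (subset_closure (.inr rfl)))
    (by rw [hef.mul_pow, he.dir, hf.dir, one_mul])

theorem commute_conjNorm_mul_inv_mul (he : CubeFlanked w e) (hf : CubeFlanked w f)
    (hef : Commute e f) : Commute (conjNorm w (e * f⁻¹)) (conjNorm w (e * f)) :=
  he.commute_conjNorm_conjNorm hf hef
    (mul_mem (subset_closure (.inl rfl)) (inv_mem (subset_closure (.inr rfl))))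
    (mul_mem (subset_closure (.inl rfl)) (subset_closure (.inr rfl)))

-- `w ^ 3` is a product of two commuting elements that centralize `e * f⁻¹` and `e * f`.
theorem mem_of_hasPCentralizer (he : CubeFlanked w e) (hf : CubeFlanked w f) (hef : Commute e f)
    (hdiff : HasPCentralizer 3 (e * f⁻¹)) (hsum : HasPCentralizer 3 (e * f))
    (hfP : IsolatedIn P f) : w ∈ P := by
  have hw : IsPElement 3 (w ^ (1 : ℤ)) := by
    rw [zpow_one]
    apply IsPElement.of_pow
    rw [he.pow_three_eq_conjNorm_mul_conjNorm hf hef]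
    exact (hdiff.isPElement_of_commute (he.commute_conjNorm_mul_inv hf hef)).mul
      (hsum.isPElement_of_commute (he.commute_conjNorm_mul hf hef))
      (he.commute_conjNorm_mul_inv_mul hf hef)
  simpa using he.zpow_mem_of_isolatedIn hf hef hfP hw

-- The `3`-part of `w` lies in `P`, and a sufficiently high power `w ^ 3 ^ k` centralizes `e * f⁻¹`.
theorem commute_mul_inv [Finite G] (he : CubeFlanked w e) (hf : CubeFlanked w f)
    (hef : Commute e f) (hdiff : ∀ x ∈ P, Commute x (e * f⁻¹)) (hsum : HasPCentralizer 3 (e * f))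
    (hfP : IsolatedIn P f) : Commute w (e * f⁻¹) := by
  obtain ⟨k, hk⟩ := hsum.isPElement_of_commute (he.commute_conjNorm_mul hf hef)
  have hpow : Commute (w ^ 3 ^ (k + 1)) (e * f⁻¹) := by
    rw [pow_succ', pow_mul, he.pow_three_eq_conjNorm_mul_conjNorm hf hef,
      (he.commute_conjNorm_mul_inv_mul hf hef).mul_pow, hk, mul_one]
    exact (he.commute_conjNorm_mul_inv hf hef).pow_left _
  have : Fact (Nat.Prime 3) := ⟨Nat.prime_three⟩
  obtain ⟨a, c, hw, ha⟩ := exists_zpow_mul_zpow_isPElement (p := 3) w (k + 1)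
  rw [hw]
  exact (hdiff _ (he.zpow_mem_of_isolatedIn hf hef hfP ha)).mul_left (hpow.zpow_left c)

end CubeFlanked

section Grid

/-- The constraints satisfied by the points with trivial cube in a coset of a special plane
`𝔽₃ × 𝔽₃`, in which the direction `(0, 1)` is distinguished. -/
structure IsCubeGrid (T : Finset (ZMod 3 × ZMod 3)) : Prop where
  line : ∀ x v, v.1 ≠ 0 → x + v ∈ T → x - v ∈ T → x ∉ T
  cross : ∀ x v, v.1 ≠ 0 → x + v ∈ T → x - v ∈ T → x + (0, 1) ∈ T → x - (0, 1) ∉ T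
  column : ∀ x v, v.1 ≠ 0 → x + v ∈ T → x - v ∈ T → x + (v + (0, 1)) ∈ T →
    x - (v + (0, 1)) ∈ T → x + (v - (0, 1)) ∈ T

/-- The second coordinates of the points of `T` with first coordinate `i`. -/
def gridColumn (T : Finset (ZMod 3 × ZMod 3)) (i : ZMod 3) : Finset (ZMod 3) :=
  {j | (i, j) ∈ T}

/-- The first coordinates of the columns contained in `T`. -/
def fullColumns (T : Finset (ZMod 3 × ZMod 3)) : Finset (ZMod 3) :=
  {i | gridColumn T i = Finset.univ}

variable {T : Finset (ZMod 3 × ZMod 3)} {i j d : ZMod 3}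

theorem mem_gridColumn : j ∈ gridColumn T i ↔ (i, j) ∈ T := by
  simp [gridColumn]

theorem card_eq_sum_card_gridColumn (T : Finset (ZMod 3 × ZMod 3)) :
    T.card = ∑ i, (gridColumn T i).card := by
  rw [Finset.card_eq_sum_card_fiberwise (f := Prod.fst) (t := Finset.univ) (by simp)]
  refine Finset.sum_congr rfl fun i _ => ?_
  refine Finset.card_nbij' Prod.snd (Prod.mk i) ?_ ?_ ?_ ?_ <;>
    simp +contextual [gridColumn, Set.MapsTo, Set.LeftInvOn, eq_comm]

theorem sum_zmod_three (f : ZMod 3 → ℕ) (i : ZMod 3) :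
    ∑ k, f k = f i + f (i + 1) + f (i - 1) := by
  have : (Finset.univ : Finset (ZMod 3)) = {i, i + 1, i - 1} := by decide +revert
  rw [this, Finset.sum_insert, Finset.sum_pair, add_assoc] <;> decide +revert

theorem card_fullColumns (T : Finset (ZMod 3 × ZMod 3)) :
    (fullColumns T).card = ∑ i, if (gridColumn T i).card = 3 then 1 else 0 := by
  rw [fullColumns, Finset.card_filter]
  simp only [← Finset.card_eq_iff_eq_univ, ZMod.card]

namespace IsCubeGrid

theorem gridColumn_eq_empty (hT : IsCubeGrid T) (hd : d ≠ 0) (hi : 2 ≤ (gridColumn T i).card) :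
    gridColumn T (i + d) = ∅ ∨ gridColumn T (i - d) = ∅ := by
  by_contra! hne
  obtain ⟨⟨k, hk⟩, l, hl⟩ := hne
  rw [mem_gridColumn] at hk hl
  have hk' : (i, -(k + l)) + (d, k + (k + l)) ∈ T := by
    rwa [Prod.mk_add_mk, neg_add_cancel_comm_assoc]
  have hl' : (i, -(k + l)) - (d, k + (k + l)) ∈ T := by
    have : ∀ k l : ZMod 3, -(k + l) - (k + (k + l)) = l := by decide
    rwa [Prod.mk_sub_mk, this]
  have hpoints : ∀ A : Finset (ZMod 3), 2 ≤ A.card → ∀ y, y ∉ A → y + 1 ∈ A ∧ y - 1 ∈ A := by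
    decide
  have hnotMem := hT.line (i, -(k + l)) (d, k + (k + l)) hd hk' hl'
  obtain ⟨hup, hdown⟩ := hpoints _ hi _ (mt mem_gridColumn.mp hnotMem)
  refine hT.cross (i, -(k + l)) (d, k + (k + l)) hd hk' hl' ?_ ?_
  · simpa using mem_gridColumn.mp hup
  · simpa using mem_gridColumn.mp hdown

theorem card_gridColumn_eq_three (hT : IsCubeGrid T) (hd : d ≠ 0)
    (hright : 2 ≤ (gridColumn T (i + d)).card) (hleft : 2 ≤ (gridColumn T (i - d)).card) :
    (gridColumn T (i + d)).card = 3 := by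
  have hpair : ∀ A : Finset (ZMod 3), 2 ≤ A.card → ∃ a ∈ A, a + 1 ∈ A := by decide
  have hfull : ∀ (A : Finset (ZMod 3)) (a), a ∈ A → a + 1 ∈ A → a - 1 ∈ A → A.card = 3 := by
    decide
  obtain ⟨k, hk, hk₁⟩ := hpair _ hright
  obtain ⟨l, hl, hl₁⟩ := hpair _ hleft
  refine hfull _ k hk hk₁ (mem_gridColumn.mpr ?_)
  rw [mem_gridColumn] at hk hk₁ hl hl₁
  have hreflect : ∀ k l : ZMod 3, -(k + l + 1) - (k + (k + l + 1)) = l + 1 ∧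
      -(k + l + 1) - (k + (k + l + 1) + 1) = l := by decide
  have := hT.column (i, -(k + l + 1)) (d, k + (k + l + 1)) hd
    (by rwa [Prod.mk_add_mk, neg_add_cancel_comm_assoc])
    (by rwa [Prod.mk_sub_mk, (hreflect k l).1])
    (by rwa [Prod.mk_add_mk, Prod.mk_add_mk, add_zero, add_right_comm, neg_add_cancel_comm_assoc])
    (by rwa [Prod.mk_add_mk, Prod.mk_sub_mk, add_zero, (hreflect k l).2])
  rwa [Prod.mk_sub_mk, Prod.mk_add_mk, sub_zero, ← add_sub_assoc, neg_add_cancel_comm_assoc] at this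

-- Among the columns `i`, `j`, `k`, one with two points leaves another one empty, and two with two
-- points are both full.
theorem card_gridColumn_trichotomy (hT : IsCubeGrid T) (i j k : ZMod 3) (hij : i + 1 = j)
    (hik : i - 1 = k) :
    (2 ≤ (gridColumn T i).card → (gridColumn T j).card = 0 ∨ (gridColumn T k).card = 0) ∧
      (2 ≤ (gridColumn T j).card → 2 ≤ (gridColumn T k).card →
        (gridColumn T j).card = 3 ∧ (gridColumn T k).card = 3) := by
  subst hij hik
  simp only [Finset.card_eq_zero]
  refine ⟨hT.gridColumn_eq_empty one_ne_zero, fun hj hk =>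
    ⟨hT.card_gridColumn_eq_three one_ne_zero hj hk, ?_⟩⟩
  have := hT.card_gridColumn_eq_three (i := i) (d := -1) (by decide)
  rw [← sub_eq_add_neg, sub_neg_eq_add] at this
  exact this hk hj

theorem card_le (hT : IsCubeGrid T) : T.card ≤ 3 + 2 * (fullColumns T).card := by
  have h₀ := hT.card_gridColumn_trichotomy 0 1 2 rfl rfl
  have h₁ := hT.card_gridColumn_trichotomy 1 2 0 rfl rfl
  have h₂ := hT.card_gridColumn_trichotomy 2 0 1 rfl rfl
  have hle (i) : (gridColumn T i).card ≤ 3 := (Finset.card_le_univ _).trans_eq (ZMod.card 3)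
  have := hle 0
  have := hle 1
  have := hle 2
  rw [card_eq_sum_card_gridColumn, card_fullColumns, sum_zmod_three _ 0, sum_zmod_three _ 0]
  change _ + (gridColumn T 1).card + (gridColumn T 2).card ≤ 3 + 2 *
    (_ + (if (gridColumn T 1).card = 3 then 1 else 0) +
      if (gridColumn T 2).card = 3 then 1 else 0)
  split_ifs <;> omega

theorem card_le_of_symm (hT : IsCubeGrid T) {x : ZMod 3 × ZMod 3} (hx : x ∉ T)
    (hsymm : ∀ v, x + v ∈ T → x - v ∈ T) : T.card ≤ 2 + 2 * (fullColumns T).card := by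
  obtain ⟨i, y⟩ := x
  have hreflect {d j} (hj : j ∈ gridColumn T (i + d)) : y - (j - y) ∈ gridColumn T (i - d) :=
    mem_gridColumn.mpr (hsymm (d, j - y) (by simpa using mem_gridColumn.mp hj))
  have hcard : (gridColumn T (i + 1)).card = (gridColumn T (i - 1)).card := by
    refine Finset.card_nbij' (fun j => y - (j - y)) (fun j => y - (j - y)) (fun _ => hreflect)
      (fun j hj => ?_) (fun j _ => by ring) (fun j _ => by ring)
    have := hreflect (d := -1) (j := j) (by rwa [← sub_eq_add_neg])
    rwa [sub_neg_eq_add] at this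
  have heven : ∀ (A : Finset (ZMod 3)) (y), y ∉ A → (∀ j ∈ A, y - (j - y) ∈ A) →
      A.card = 0 ∨ A.card = 2 := by decide
  have hcol := heven (gridColumn T i) y (mt mem_gridColumn.mp hx) fun j hj => by
    simpa using hreflect (d := 0) (j := j) (by rwa [add_zero])
  have htri := hT.card_gridColumn_trichotomy i _ _ rfl rfl
  rw [card_eq_sum_card_gridColumn, card_fullColumns, sum_zmod_three _ i, sum_zmod_three _ i]
  split_ifs <;> omega

end IsCubeGrid
end Grid

section Involutions

variable {G : Type*} [Group G] {w v y : G}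

theorem conj_eq_inv_of_sq_eq_one (hw : w ^ 2 = 1) (hwv : (w * v) ^ 2 = 1) : w * v * w⁻¹ = v⁻¹ := by
  have hww : w⁻¹ = w := inv_eq_of_mul_eq_one_right (pow_two w ▸ hw)
  rw [hww, eq_inv_iff_mul_eq_one, mul_assoc, ← pow_two, hwv]

theorem mul_inv_pow_three_eq_one (hw : w ^ 2 = 1) (hwv : (w * v) ^ 3 = 1) :
    (w * v⁻¹) ^ 3 = 1 := by
  have hww : w⁻¹ = w := inv_eq_of_mul_eq_one_right (pow_two w ▸ hw)
  have hconj : w * v⁻¹ = w * (w * v)⁻¹ * w⁻¹ := by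
    rw [mul_inv_rev, hww, mul_assoc, mul_assoc, ← pow_two, hw, mul_one]
  rw [hconj, conj_pow, inv_pow, hwv, inv_one, mul_one, mul_inv_cancel]

theorem eq_one_of_conj_eq_inv (hy : y ^ 3 = 1) (hv : v ^ 3 = 1) (hyv : y * v * y⁻¹ = v⁻¹) :
    v = 1 := by
  have hcube : y ^ 3 * v * (y ^ 3)⁻¹ = v⁻¹ := by
    calc y ^ 3 * v * (y ^ 3)⁻¹ = y * (y * (y * v * y⁻¹) * y⁻¹) * y⁻¹ := by
          rw [pow_three]; group
      _ = v⁻¹ := by rw [hyv, ← conj_inv, hyv, inv_inv, hyv]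
  rw [hy, one_mul, inv_one, mul_one, eq_comm, inv_eq_iff_mul_eq_one] at hcube
  rwa [pow_three, hcube, mul_one] at hv

end Involutions

/-- `u` is a homomorphism from the plane `𝔽₃ × 𝔽₃` to the Sylow subgroup `P` that maps `(0, 1)` to a
nontrivial central element and every vector outside the line through `(0, 1)` to an element
isolated in `P` whose centralizer is a `3`-group. -/
structure IsSpecialPlane {G : Type*} [Group G] (P : Sylow 3 G) (u : ZMod 3 × ZMod 3 → G) :
    Prop where
  map_add : ∀ v w, u (v + w) = u v * u w
  mem : ∀ v, u v ∈ P
  ne_one : u (0, 1) ≠ 1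
  commute : ∀ x ∈ P, Commute x (u (0, 1))
  isolatedIn : ∀ v, v.1 ≠ 0 → IsolatedIn P (u v)
  hasPCentralizer : ∀ v, v.1 ≠ 0 → HasPCentralizer 3 (u v)

section Plane

variable {G : Type*} [Group G]

open Classical in
/-- The points `v` of the plane for which `g * u v` has trivial cube. -/
noncomputable def cubePoints (u : ZMod 3 × ZMod 3 → G) (g : G) : Finset (ZMod 3 × ZMod 3) :=
  {v | (g * u v) ^ 3 = 1}

open Classical in
/-- The points `v` of the plane for which `g * u v` is an involution. -/
noncomputable def involutionPoints (u : ZMod 3 × ZMod 3 → G) (g : G) :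
    Finset (ZMod 3 × ZMod 3) :=
  {v | orderOf (g * u v) = 2}

variable {P : Sylow 3 G} {u : ZMod 3 × ZMod 3 → G} {g : G} {v x : ZMod 3 × ZMod 3}

theorem mem_cubePoints : v ∈ cubePoints u g ↔ (g * u v) ^ 3 = 1 := by
  simp [cubePoints]

theorem mem_involutionPoints : v ∈ involutionPoints u g ↔ orderOf (g * u v) = 2 := by
  simp [involutionPoints]

theorem sq_eq_one_of_mem_involutionPoints (hx : x ∈ involutionPoints u g) :
    (g * u x) ^ 2 = 1 :=
  mem_involutionPoints.mp hx ▸ pow_orderOf_eq_one _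

theorem notMem_cubePoints_of_mem_involutionPoints (hx : x ∈ involutionPoints u g) :
    x ∉ cubePoints u g := by
  intro hx'
  have := orderOf_dvd_of_pow_eq_one (mem_cubePoints.mp hx')
  rw [mem_involutionPoints.mp hx] at this
  omega

namespace IsSpecialPlane

theorem of_forall_isolatedIn {e z : G} (he : e ∈ P) (he₃ : e ^ 3 = 1) (hz : z ∈ P)
    (hz₃ : z ^ 3 = 1) (hz₁ : z ≠ 1) (hcomm : ∀ x ∈ P, Commute x z)
    (hisol : ∀ j : ℕ, IsolatedIn P (e * z ^ j))
    (hcent : ∀ j : ℕ, HasPCentralizer 3 (e * z ^ j)) :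
    IsSpecialPlane P fun v => e ^ v.1.val * z ^ v.2.val := by
  have hmul (x : G) (hx : x ^ 3 = 1) (i j : ZMod 3) : x ^ (i + j).val = x ^ i.val * x ^ j.val := by
    rw [ZMod.val_add, ← pow_eq_pow_mod _ hx, pow_add]
  have hadd (v w : ZMod 3 × ZMod 3) : e ^ (v + w).1.val * z ^ (v + w).2.val =
      e ^ v.1.val * z ^ v.2.val * (e ^ w.1.val * z ^ w.2.val) := by
    rw [Prod.fst_add, Prod.snd_add, hmul e he₃, hmul z hz₃]
    exact ((hcomm e he).pow_pow _ _).mul_mul_mul_comm _ _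
  have hcases : ∀ i : ZMod 3, i ≠ 0 → i = 1 ∨ i = -1 := by decide
  have hinv (j : ZMod 3) : e ^ (-1 : ZMod 3).val * z ^ j.val = (e * z ^ (-j).val)⁻¹ := by
    have := hadd (-1, j) (1, -j)
    simp only [Prod.mk_add_mk, neg_add_cancel, add_neg_cancel, ZMod.val_zero, pow_zero, one_mul,
      ZMod.val_one, pow_one] at this
    exact eq_inv_of_mul_eq_one_left this.symm
  refine ⟨hadd, fun v => mul_mem (pow_mem he _) (pow_mem hz _), ?_, ?_, ?_, ?_⟩
  · simpa [ZMod.val_one] using hz₁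
  · simpa [ZMod.val_one] using hcomm
  · rintro ⟨i, j⟩ hi
    obtain rfl | rfl := hcases i hi
    · simpa [ZMod.val_one] using hisol j.val
    · simpa only [hinv] using (hisol _).inv
  · rintro ⟨i, j⟩ hi
    obtain rfl | rfl := hcases i hi
    · simpa [ZMod.val_one] using hcent j.val
    · simpa only [hinv] using (hcent _).inv

variable (hu : IsSpecialPlane P u)
include hu

theorem map_zero : u 0 = 1 := by
  simpa using (hu.map_add 0 0).symm

theorem map_sub (v w : ZMod 3 × ZMod 3) : u (v - w) = u v * (u w)⁻¹ := by
  rw [eq_mul_inv_iff_mul_eq, ← hu.map_add, sub_add_cancel]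

theorem map_pow_three (v : ZMod 3 × ZMod 3) : u v ^ 3 = 1 := by
  have : v + (v + v) = 0 := by decide +revert
  rw [pow_three, ← hu.map_add, ← hu.map_add, this, hu.map_zero]

theorem commute_map (v w : ZMod 3 × ZMod 3) : Commute (u v) (u w) := by
  rw [commute_iff_eq, ← hu.map_add, add_comm, hu.map_add]

theorem map_snd (j : ZMod 3) : u (0, j) = u (0, 1) ^ j.val := by
  have : j = 0 ∨ j = 1 ∨ j = 1 + 1 := by decide +revert
  obtain rfl | rfl | rfl := this
  · exact hu.map_zero.trans (by simp)
  · simp [ZMod.val_one]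
  · rw [show ((0, 1 + 1) : ZMod 3 × ZMod 3) = (0, 1) + (0, 1) from rfl, hu.map_add, ← pow_two]
    rfl

theorem smul_sylow_eq_of_mul_mem (h : g * u x ∈ P) : g • P = P := by
  rw [← smul_sylow_eq_of_mem P (hu.mem x), ← mul_smul, smul_sylow_eq_of_mem P h,
    smul_sylow_eq_of_mem P (hu.mem x)]

theorem cubeFlanked (hadd : x + v ∈ cubePoints u g) (hsub : x - v ∈ cubePoints u g) :
    CubeFlanked (g * u x) (u v) where
  dir := hu.map_pow_three v
  right := by rwa [mul_assoc, ← hu.map_add, ← mem_cubePoints]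
  left := by rwa [mul_assoc, ← hu.map_sub, ← mem_cubePoints]

theorem isCubeGrid_cubePoints [Finite G] (hg : g • P ≠ P) : IsCubeGrid (cubePoints u g) where
  line x v hv hadd hsub hx := hg <| hu.smul_sylow_eq_of_mul_mem <|
    (hu.cubeFlanked hadd hsub).mem_of_isolatedIn (mem_cubePoints.mp hx) (hu.isolatedIn v hv)
  cross x v hv hadd hsub hup hdown := by
    refine hg <| hu.smul_sylow_eq_of_mul_mem <| (hu.cubeFlanked hup hdown).mem_of_hasPCentralizer
      (hu.cubeFlanked hadd hsub) (hu.commute_map _ _) ?_ ?_ (hu.isolatedIn v hv)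
    · rw [← hu.map_sub]
      exact hu.hasPCentralizer _ (by simpa using hv)
    · rw [← hu.map_add]
      exact hu.hasPCentralizer _ (by simpa using hv)
  column x v hv hadd hsub hadd' hsub' := by
    have hz : u (v + (0, 1)) * (u v)⁻¹ = u (0, 1) := by rw [← hu.map_sub, add_sub_cancel_left]
    have hcomm : Commute (g * u x) (u (0, 1)) := by
      rw [← hz]
      refine (hu.cubeFlanked hadd' hsub').commute_mul_inv (hu.cubeFlanked hadd hsub)
        (hu.commute_map _ _) (hz ▸ hu.commute) ?_ (hu.isolatedIn v hv)
      rw [← hu.map_add]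
      refine hu.hasPCentralizer _ ?_
      have : ∀ i : ZMod 3, i ≠ 0 → i + 0 + i ≠ 0 := by decide
      exact this v.1 hv
    rw [mem_cubePoints, ← add_sub_assoc, hu.map_sub, hu.map_add, ← mul_assoc, ← mul_assoc,
      ((hcomm.mul_left (hu.commute_map _ _)).inv_right).mul_pow, mul_assoc g, ← hu.map_add,
      mem_cubePoints.mp hadd, inv_pow, hu.map_pow_three, inv_one, one_mul]

theorem conj_map_eq_inv (hx : x ∈ involutionPoints u g) (hxv : x + v ∈ involutionPoints u g) :
    g * u x * u v * (g * u x)⁻¹ = (u v)⁻¹ :=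
  conj_eq_inv_of_sq_eq_one (sq_eq_one_of_mem_involutionPoints hx) <| by
    rw [mul_assoc, ← hu.map_add, sq_eq_one_of_mem_involutionPoints hxv]

theorem fst_eq_of_mem_involutionPoints (hg : g • P ≠ P) (hx : x ∈ involutionPoints u g)
    (hv : v ∈ involutionPoints u g) : v.1 = x.1 := by
  by_contra hne
  have hisol := hu.isolatedIn (v - x) (sub_ne_zero.mpr hne)
  have hconj := hu.conj_map_eq_inv (v := v - x) hx (by rwa [add_sub_cancel])
  refine hg <| by
    rw [← smul_sylow_eq_of_mem P (hu.mem x), ← mul_smul]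
    refine (hisol.inv.eq_of_mem _ ?_).trans (smul_sylow_eq_of_mem P (hu.mem x)).symm
    rw [mem_smul_sylow_iff, ← hconj]
    simpa [mul_assoc] using hisol.mem

theorem cubePoints_eq_empty (hg : g • P ≠ P) (hx : x ∈ involutionPoints u g)
    (hv : v ∈ involutionPoints u g) (hne : v ≠ x) : cubePoints u g = ∅ := by
  have hfst := hu.fst_eq_of_mem_involutionPoints hg hx hv
  have hsnd : v - x = (0, v.2 - x.2) := by ext <;> simp [hfst]
  have hvertical : ∀ y ∈ P, Commute y (u (v - x)) := fun y hy => by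
    rw [hsnd, hu.map_snd]
    exact (hu.commute y hy).pow_right _
  have hconj := hu.conj_map_eq_inv (v := v - x) hx (by rwa [add_sub_cancel])
  refine Finset.eq_empty_of_forall_notMem fun y hy => hu.ne_one ?_
  have htriv : u (v - x) = 1 := by
    refine eq_one_of_conj_eq_inv (mem_cubePoints.mp hy) (hu.map_pow_three _) ?_
    have hyx : g * u y = g * u x * u (y - x) := by
      rw [mul_assoc, ← hu.map_add, add_sub_cancel]
    rw [hyx, mul_assoc _ (u (y - x)), (hvertical _ (hu.mem _)).eq, ← hconj]
    group
  rw [hsnd, hu.map_snd] at htriv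
  have hcases : ∀ j : ZMod 3, j ≠ 0 → j.val = 1 ∨ j.val = 2 := by decide
  have hcube := hu.map_pow_three (0, 1)
  obtain h | h := hcases (v.2 - x.2) fun h => hne <| Prod.ext hfst <| sub_eq_zero.mp h
  · simpa [h] using htriv
  · rwa [pow_succ, ← h, htriv, one_mul] at hcube

theorem card_cubePoints_add_card_involutionPoints_le [Finite G] (hg : g • P ≠ P) :
    (cubePoints u g).card + (involutionPoints u g).card ≤
      3 + 2 * (fullColumns (cubePoints u g)).card := by
  obtain hJ | ⟨x, hx⟩ := (involutionPoints u g).eq_empty_or_nonempty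
  · simpa [hJ] using (hu.isCubeGrid_cubePoints hg).card_le
  obtain hsub | ⟨v, hv, hne⟩ : involutionPoints u g ⊆ {x} ∨ ∃ v ∈ involutionPoints u g, v ≠ x := by
    simp only [Finset.subset_singleton_iff', or_iff_not_imp_left, not_forall, exists_prop, imp_self]
  · have hsymm := (hu.isCubeGrid_cubePoints hg).card_le_of_symm
      (notMem_cubePoints_of_mem_involutionPoints hx) fun v hv => by
        rw [mem_cubePoints, hu.map_sub, ← mul_assoc]
        exact mul_inv_pow_three_eq_one (sq_eq_one_of_mem_involutionPoints hx)
          (by rwa [mul_assoc, ← hu.map_add, ← mem_cubePoints])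
    have := Finset.card_le_card hsub
    rw [Finset.card_singleton] at this
    omega
  · have hcard : (involutionPoints u g).card ≤ (Finset.univ : Finset (ZMod 3)).card :=
      Finset.card_le_card_of_injOn Prod.snd (by simp) fun a ha b hb hab =>
        Prod.ext (hu.fst_eq_of_mem_involutionPoints hg hb ha) hab
    rw [hu.cubePoints_eq_empty hg hx hv hne]
    rw [Finset.card_univ, ZMod.card] at hcard
    simp only [Finset.card_empty]
    omega

end IsSpecialPlane

end Plane

section SylowCounting

variable {G : Type*} [Group G] {p : ℕ}

/-- The number of Sylow `p`-subgroups containing `y`. -/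
noncomputable def sylowCount (p : ℕ) (y : G) : ℕ := {Q : Sylow p G | y ∈ Q}.ncard

/-- The index of the Sylow subgroup `P` in its normalizer. -/
noncomputable def normalizerIndex (P : Sylow p G) : ℕ :=
  (P : Subgroup G).relIndex (normalizer (P : Set G))

theorem conj_mem_smul_sylow_iff {Q : Sylow p G} {g y : G} : g * y * g⁻¹ ∈ g • Q ↔ y ∈ Q := by
  rw [mem_smul_sylow_iff]
  simp [mul_assoc]

theorem isolatedIn_smul_conj_iff {P : Sylow p G} {g y : G} :
    IsolatedIn (g • P) (g * y * g⁻¹) ↔ IsolatedIn P y := by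
  refine ⟨fun h => ⟨conj_mem_smul_sylow_iff.mp h.mem, fun Q hQ => ?_⟩,
    fun h => ⟨conj_mem_smul_sylow_iff.mpr h.mem, fun Q hQ => ?_⟩⟩
  · exact smul_left_cancel g (h.eq_of_mem _ (conj_mem_smul_sylow_iff.mpr hQ))
  · rw [← h.eq_of_mem (g⁻¹ • Q), smul_inv_smul]
    rw [← smul_inv_smul g Q] at hQ
    exact conj_mem_smul_sylow_iff.mp hQ

theorem isPElement_of_mem (P : Sylow p G) {y : G} (hy : y ∈ P) : IsPElement p y :=
  isPGroup_iff_forall_isPElement.mp P.isPGroup' y hy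

theorem IsPElement.exists_mem_sylow {y : G} (hy : IsPElement p y) : ∃ Q : Sylow p G, y ∈ Q := by
  obtain ⟨Q, hQ⟩ := hy.isPGroup_zpowers.exists_le_sylow
  exact ⟨Q, hQ (mem_zpowers y)⟩

theorem isolatedIn_iff_sylowCount_eq_one {P : Sylow p G} {y : G} (hy : y ∈ P) :
    IsolatedIn P y ↔ sylowCount p y = 1 := by
  rw [sylowCount, Set.ncard_eq_one]
  refine ⟨fun h => ⟨P, Set.eq_singleton_iff_unique_mem.mpr ⟨hy, h.eq_of_mem⟩⟩, fun ⟨R, hR⟩ => ?_⟩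
  obtain ⟨-, huniq⟩ := Set.eq_singleton_iff_unique_mem.mp hR
  exact ⟨hy, fun Q hQ => (huniq Q hQ).trans (huniq P hy).symm⟩

theorem ncard_setOf_eq_sum {α : Type*} [Fintype α] (X : α → Prop) [DecidablePred X] :
    {y | X y}.ncard = ∑ y, if X y then 1 else 0 := by
  rw [Set.ncard_eq_toFinset_card', Set.toFinset_ofPred, Finset.card_filter]

theorem conj_mem_iff {X : Set G} (hconj : ∀ g, ∀ y ∈ X, g * y * g⁻¹ ∈ X) (g y : G) :
    g * y * g⁻¹ ∈ X ↔ y ∈ X :=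
  ⟨fun h => by simpa [mul_assoc] using hconj g⁻¹ _ h, hconj g y⟩

-- Sylow subgroups are conjugate, so all inner sums agree.
theorem sum_sum_sylow [Fact p.Prime] [Fintype G] [Fintype (Sylow p G)] (f : Sylow p G → G → ℕ)
    (hf : ∀ g Q y, f (g • Q) (g * y * g⁻¹) = f Q y) (P : Sylow p G) :
    ∑ y, ∑ Q, f Q y = Nat.card (Sylow p G) * ∑ y, f P y := by
  have hconst (Q : Sylow p G) : ∑ y, f Q y = ∑ y, f P y := by
    obtain ⟨g, rfl⟩ := MulAction.exists_smul_eq G P Q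
    rw [← Equiv.sum_comp (MulAut.conj g).toEquiv]
    exact Finset.sum_congr rfl fun y _ => hf g P y
  rw [Finset.sum_comm, Finset.sum_congr rfl fun Q _ => hconst Q, Finset.sum_const,
    Finset.card_univ, smul_eq_mul, Nat.card_eq_fintype_card]

theorem isPElement_of_orderOf_eq {y : G} (hy : orderOf y = p) : IsPElement p y :=
  ⟨1, by rw [pow_one, ← hy, pow_orderOf_eq_one]⟩

theorem orderOf_conj (g y : G) : orderOf (g * y * g⁻¹) = orderOf y :=
  (MulAut.conj g).orderOf_eq y

section Prime

variable [Finite G] [Fact p.Prime]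

theorem sylowCount_modEq_one {y : G} (hy : IsPElement p y) : sylowCount p y ≡ 1 [MOD p] := by
  have hfixed : MulAction.fixedPoints (zpowers y) (Sylow p G) = {Q | y ∈ Q} := by
    ext Q
    exact hy.isPGroup_zpowers.sylow_mem_fixedPoints_iff.trans (zpowers_le (H := (Q : Subgroup G)))
  have h := hy.isPGroup_zpowers.card_modEq_card_fixedPoints (Sylow p G)
  rw [hfixed, Nat.card_coe_set_eq] at h
  exact h.symm.trans (card_sylow_modEq_one p G)

theorem succ_le_sylowCount {P : Sylow p G} {y : G} (hy : y ∈ P) (hP : ¬ IsolatedIn P y) :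
    p + 1 ≤ sylowCount p y := by
  rw [isolatedIn_iff_sylowCount_eq_one hy] at hP
  have hpos : 0 < sylowCount p y := (Set.ncard_pos).mpr ⟨P, hy⟩
  have hdvd : p ∣ sylowCount p y - 1 :=
    (Nat.modEq_iff_dvd' hpos).mp (sylowCount_modEq_one (isPElement_of_mem P hy)).symm
  have := Nat.le_of_dvd (by omega) hdvd
  omega

variable {X : Set G}

theorem succ_le_mul_ncard_isolatedIn_add_sylowCount {y : G} (hy : IsPElement p y) :
    p + 1 ≤ p * {Q : Sylow p G | IsolatedIn Q y}.ncard + sylowCount p y := by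
  obtain ⟨Q, hQ⟩ := hy.exists_mem_sylow
  by_cases hisol : IsolatedIn Q y
  · rw [(isolatedIn_iff_sylowCount_eq_one hQ).mp hisol]
    have : 0 < {Q : Sylow p G | IsolatedIn Q y}.ncard := (Set.ncard_pos).mpr ⟨Q, hisol⟩
    gcongr
    exact Nat.le_mul_of_pos_right p this
  · exact (succ_le_sylowCount hQ hisol).trans (Nat.le_add_left _ _)

theorem succ_mul_ncard_le (P : Sylow p G) (hconj : ∀ g, ∀ y ∈ X, g * y * g⁻¹ ∈ X)
    (hX : ∀ y ∈ X, IsPElement p y) :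
    (p + 1) * X.ncard ≤ Nat.card (Sylow p G) *
      (p * {y | y ∈ X ∧ IsolatedIn P y}.ncard + {y | y ∈ X ∧ y ∈ P}.ncard) := by
  classical
  have := Fintype.ofFinite G
  have := Fintype.ofFinite (Sylow p G)
  have hsum := sum_sum_sylow (fun Q y => p * (if y ∈ X ∧ IsolatedIn Q y then 1 else 0) +
    if y ∈ X ∧ y ∈ Q then 1 else 0)
    (fun g Q y => by
      simp only [conj_mem_iff hconj, isolatedIn_smul_conj_iff, conj_mem_smul_sylow_iff]) P
  rw [ncard_setOf_eq_sum, ncard_setOf_eq_sum, Finset.mul_sum, ← Finset.sum_add_distrib, ← hsum,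
    ← Set.ofPred_mem_eq (s := X), ncard_setOf_eq_sum, Finset.mul_sum]
  refine Finset.sum_le_sum fun y _ => ?_
  by_cases hy : y ∈ X
  · have := succ_le_mul_ncard_isolatedIn_add_sylowCount (hX y hy)
    rw [sylowCount, ncard_setOf_eq_sum, ncard_setOf_eq_sum, Finset.mul_sum,
      ← Finset.sum_add_distrib] at this
    simpa [hy] using this
  · simp [hy]

theorem ncard_le_card_sylow_mul (P : Sylow p G) (hconj : ∀ g, ∀ y ∈ X, g * y * g⁻¹ ∈ X)
    (hX : ∀ y ∈ X, IsPElement p y) :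
    X.ncard ≤ Nat.card (Sylow p G) * {y | y ∈ X ∧ y ∈ P}.ncard := by
  have hisol : {y | y ∈ X ∧ IsolatedIn P y}.ncard ≤ {y | y ∈ X ∧ y ∈ P}.ncard :=
    Set.ncard_le_ncard fun y hy => ⟨hy.1, hy.2.mem⟩
  refine le_of_mul_le_mul_left ?_ p.succ_pos
  calc (p + 1) * X.ncard ≤ _ := succ_mul_ncard_le P hconj hX
    _ ≤ Nat.card (Sylow p G) *
        (p * {y | y ∈ X ∧ y ∈ P}.ncard + {y | y ∈ X ∧ y ∈ P}.ncard) := by gcongr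
    _ = (p + 1) * (Nat.card (Sylow p G) * {y | y ∈ X ∧ y ∈ P}.ncard) := by ring

theorem card_eq_card_sylow_mul_card_normalizer (P : Sylow p G) :
    Nat.card G = Nat.card (Sylow p G) * Nat.card (normalizer (P : Set G)) := by
  rw [Sylow.card_eq_index_normalizer P, Subgroup.index_mul_card]

end Prime

theorem card_normalizer_eq (P : Sylow p G) :
    Nat.card (normalizer (P : Set G)) = normalizerIndex P * Nat.card P := by
  rw [← relIndex_bot_left, ← relIndex_bot_left, mul_comm]
  exact (relIndex_mul_relIndex ⊥ (P : Subgroup G) _ bot_le le_normalizer).symm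

theorem ncard_mem_add_one_le [Finite G] (P : Sylow p G) {X : Set G}
    (hone : 1 ∉ X) : {y | y ∈ X ∧ y ∈ P}.ncard + 1 ≤ Nat.card P := by
  rw [← Set.ncard_insert_of_notMem (a := 1) fun h => hone h.1]
  exact Set.ncard_le_ncard (Set.insert_subset (one_mem P) fun y hy => hy.2)

end SylowCounting

section ConjugacyClassInSylow

variable {G : Type*} [Group G] {p : ℕ}

/-- The conjugates of `z` lying in the Sylow subgroup `A`. -/
def classPart (z : G) (A : Sylow p G) : Set G := conjugatesOf z ∩ A

/-- No Sylow `p`-subgroup contains both `x` and `y`. -/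
def NoCommonSylow (p : ℕ) (x y : G) : Prop := ∀ C : Sylow p G, x ∈ C → y ∉ C

/-- `D` has at least as many elements as any intersection of two distinct sets of conjugates of `z`
in Sylow `p`-subgroups. -/
def DominatesClassInter (p : ℕ) (z : G) (D : Set G) : Prop :=
  ∀ A B : Sylow p G, classPart z A ≠ classPart z B →
    (classPart z A ∩ classPart z B).ncard ≤ D.ncard

/-- `a` is a conjugate of `z` in `A` outside `D`, normalizing the set `D` of conjugates of `z`
in `A`. -/
structure NormalizesInClass (z : G) (D : Set G) (a : G) (A : Sylow p G) : Prop where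
  mem : a ∈ classPart z A
  notMem : a ∉ D
  subset : D ⊆ classPart z A
  mem_normalizer : a ∈ normalizer D

variable {z g : G} {A B : Sylow p G}

theorem conj_mem_conjugatesOf {x : G} (hx : x ∈ conjugatesOf z) (g : G) :
    g * x * g⁻¹ ∈ conjugatesOf z :=
  IsConj.trans (show IsConj z x from hx) (isConj_iff.mpr ⟨g, rfl⟩)

theorem conj_mem_conjugatesOf_iff {x : G} : g * x * g⁻¹ ∈ conjugatesOf z ↔ x ∈ conjugatesOf z :=
  conj_mem_iff (fun g _ hx => conj_mem_conjugatesOf hx g) g x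

theorem classPart_smul (z : G) (A : Sylow p G) (g : G) :
    classPart z (g • A) = MulAut.conj g '' classPart z A := by
  ext x
  obtain ⟨y, rfl⟩ := (MulAut.conj g).surjective x
  rw [(MulAut.conj g).injective.mem_set_image]
  exact and_congr conj_mem_conjugatesOf_iff conj_mem_smul_sylow_iff

theorem mem_normalizer_conjugatesOf_inter {v : G} {Y : Subgroup G}
    (hv : v ∈ normalizer (Y : Set G)) : v ∈ normalizer (conjugatesOf z ∩ (Y : Set G)) := by
  rw [mem_set_normalizer_iff] at hv ⊢
  exact fun x => and_congr conj_mem_conjugatesOf_iff.symm (hv x)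

theorem sylowCount_conj (p : ℕ) (g y : G) : sylowCount p (g * y * g⁻¹) = sylowCount p y := by
  rw [sylowCount, sylowCount,
    ← Set.ncard_image_of_injective {Q : Sylow p G | y ∈ Q} (MulAction.injective g)]
  congr 1
  ext Q
  rw [← smul_inv_smul g Q, (MulAction.injective g).mem_set_image]
  exact conj_mem_smul_sylow_iff

theorem sylowCount_eq_of_mem_conjugatesOf (p : ℕ) {x : G} (hx : x ∈ conjugatesOf z) :
    sylowCount p x = sylowCount p z := by
  obtain ⟨g, rfl⟩ := isConj_iff.mp (show IsConj z x from hx)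
  exact sylowCount_conj p g z

namespace NoCommonSylow

variable {x y : G}

protected theorem symm (h : NoCommonSylow p x y) : NoCommonSylow p y x :=
  fun C hy hx => h C hx hy

theorem conj (h : NoCommonSylow p x y) (g : G) : NoCommonSylow p (g * x * g⁻¹) (g * y * g⁻¹) := by
  intro C hx hy
  rw [← smul_inv_smul g C, conj_mem_smul_sylow_iff] at hx hy
  exact h _ hx hy

theorem disjoint (h : NoCommonSylow p x y) :
    Disjoint {Q : Sylow p G | x ∈ Q} {Q : Sylow p G | y ∈ Q} :=
  Set.disjoint_left.mpr h

end NoCommonSylow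

theorem NormalizesInClass.conj {D : Set G} {a n : G} (h : NormalizesInClass z D a A)
    (hn : n ∈ normalizer D) : NormalizesInClass z D (n * a * n⁻¹) (n • A) where
  mem := ⟨conj_mem_conjugatesOf h.mem.1 n, conj_mem_smul_sylow_iff.mpr h.mem.2⟩
  notMem := fun ha => h.notMem ((mem_set_normalizer_iff.mp hn a).mpr ha)
  subset := by
    rw [classPart_smul]
    intro d hd
    refine ⟨n⁻¹ * d * n, h.subset ((mem_set_normalizer_iff.mp hn _).mpr ?_), ?_⟩
    · simpa [mul_assoc] using hd
    · simp [mul_assoc]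
  mem_normalizer := mul_mem (mul_mem hn h.mem_normalizer) (inv_mem hn)

variable [Finite G]

namespace NormalizesInClass

variable {D : Set G} (hD : DominatesClassInter p z D) {a b : G} {C : Sylow p G}
  (ha : NormalizesInClass z D a A)
include hD ha

theorem classPart_eq (hDC : D ⊆ C) (haC : a ∈ C) : classPart z C = classPart z A := by
  by_contra hne
  have hsub : D ⊆ classPart z C ∩ classPart z A :=
    fun d hd => ⟨⟨(ha.subset hd).1, hDC hd⟩, ha.subset hd⟩
  have hssub : D ⊂ classPart z C ∩ classPart z A :=
    (Set.ssubset_iff_of_subset hsub).mpr ⟨a, ⟨⟨ha.mem.1, haC⟩, ha.mem⟩, ha.notMem⟩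
  exact (hD _ _ hne).not_gt (Set.ncard_lt_ncard hssub)

theorem classPart_eq_classPart (hb : NormalizesInClass z D b B) (haC : a ∈ C) (hbC : b ∈ C) :
    classPart z A = classPart z B := by
  have hpair : IsPGroup p (closure {a, b}) :=
    C.isPGroup'.to_le ((closure_le _).mpr (Set.pair_subset haC hbC))
  have hcl : IsPGroup p (closure D) :=
    A.isPGroup'.to_le ((closure_le _).mpr fun d hd => (ha.subset hd).2)
  have hnorm : closure {a, b} ≤ normalizer (closure D : Set G) :=
    ((closure_le _).mpr (Set.pair_subset ha.mem_normalizer hb.mem_normalizer)).trans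
      (normalizer_le_normalizer_closure D)
  obtain ⟨Q, hQ⟩ := (hpair.to_sup_of_normal_right' hcl hnorm).exists_le_sylow
  have hDQ : D ⊆ Q := fun d hd => hQ (mem_sup_right (subset_closure hd))
  rw [← ha.classPart_eq hD hDQ (hQ (mem_sup_left (subset_closure (.inl rfl)))),
    ← hb.classPart_eq hD hDQ (hQ (mem_sup_left (subset_closure (.inr rfl))))]

end NormalizesInClass

theorem exists_maximal_classPart_inter (hz : IsPElement p z) (hn : ∃ Q : Sylow p G, z ∉ Q) :
    ∃ A B : Sylow p G, classPart z A ≠ classPart z B ∧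
      DominatesClassInter p z (classPart z A ∩ classPart z B) := by
  obtain ⟨Q, hQ⟩ := hn
  obtain ⟨R, hR⟩ := hz.exists_mem_sylow
  have hne : classPart z R ≠ classPart z Q := fun h =>
    hQ ((h ▸ ⟨mem_conjugatesOf_self, hR⟩ : z ∈ classPart z Q)).2
  obtain ⟨⟨A, B⟩, hAB, hmax⟩ := Set.exists_max_image
    {q : Sylow p G × Sylow p G | classPart z q.1 ≠ classPart z q.2}
    (fun q => (classPart z q.1 ∩ classPart z q.2).ncard) (Set.toFinite _) ⟨(R, Q), hne⟩
  exact ⟨A, B, hAB, fun C D h => hmax (C, D) h⟩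

variable [Fact p.Prime]

theorem exists_mem_normalizer_notMem {A Y : Subgroup G} (hA : IsPGroup p A) (h : Y < A) :
    ∃ t ∈ A, t ∉ Y ∧ t ∈ normalizer (Y : Set G) := by
  have := hA.isNilpotent
  have hlt : Y.subgroupOf A < ⊤ := by
    rw [lt_top_iff_ne_top, Ne, subgroupOf_eq_top]
    exact not_le_of_gt h
  have hgrow := Group.normalizerCondition_of_isNilpotent _ hlt
  rw [← subgroupOf_normalizer_eq h.le] at hgrow
  obtain ⟨t, htN, htY⟩ := SetLike.exists_of_lt hgrow
  exact ⟨t, t.2, htY, htN⟩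

theorem classPart_eq_of_subset (h : classPart z A ⊆ classPart z B) :
    classPart z A = classPart z B := by
  refine Set.eq_of_subset_of_ncard_le h ?_
  obtain ⟨g, rfl⟩ := MulAction.exists_smul_eq G A B
  rw [classPart_smul, Set.ncard_image_of_injective _ (MulAut.conj g).injective]

-- Enlarge a maximal subgroup `Y` of `A` meeting the class of `z` in `D` by one step of its
-- normalizer in `A`.
theorem exists_normalizesInClass (hne : classPart z A ≠ classPart z B) :
    ∃ v, NormalizesInClass z (classPart z A ∩ classPart z B) v A := by
  set D := classPart z A ∩ classPart z B with hD
  obtain ⟨Y, hY⟩ := (Set.toFinite {Y : Subgroup G | Y ≤ A ∧ conjugatesOf z ∩ Y = D}).exists_maximal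
    ⟨(A : Subgroup G) ⊓ B, inf_le_left, by
      rw [coe_inf, Set.inter_inter_distrib_left, hD]; rfl⟩
  obtain ⟨hYA, hYD⟩ := hY.prop
  have hlt : Y < (A : Subgroup G) := by
    refine lt_of_le_of_ne hYA ?_
    rintro rfl
    exact hne (classPart_eq_of_subset (hYD.le.trans Set.inter_subset_right))
  obtain ⟨t, htA, htY, htN⟩ := exists_mem_normalizer_notMem A.isPGroup' hlt
  have hYt : Y < Y ⊔ zpowers t := left_lt_sup.mpr fun h => htY (h (mem_zpowers t))
  have hYtA : Y ⊔ zpowers t ≤ A := sup_le hYA (zpowers_le.mpr htA)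
  have hsub : D ⊆ conjugatesOf z ∩ (Y ⊔ zpowers t : Subgroup G) :=
    hYD ▸ Set.inter_subset_inter_right _ hYt.le
  obtain ⟨v, hv, hvD⟩ := Set.exists_of_ssubset
    (hsub.ssubset_of_ne fun h => hY.not_prop_of_gt hYt ⟨hYtA, h.symm⟩)
  refine ⟨v, ⟨hv.1, hYtA hv.2⟩, hvD, Set.inter_subset_left, hYD ▸ ?_⟩
  exact mem_normalizer_conjugatesOf_inter (sup_le le_normalizer (zpowers_le.mpr htN) hv.2)

theorem mem_of_mem_normalizer_classPart {v : G} (hv : v ∈ classPart z A)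
    (hvB : v ∈ normalizer (classPart z B)) : v ∈ classPart z B := by
  have hcl : IsPGroup p (closure (classPart z B)) :=
    B.isPGroup'.to_le ((closure_le _).mpr fun _ hd => hd.2)
  obtain ⟨Q, hQ⟩ := ((isPElement_of_mem A hv.2).isPGroup_zpowers.to_sup_of_normal_right' hcl
    ((zpowers_le.mpr hvB).trans (normalizer_le_normalizer_closure _))).exists_le_sylow
  rw [classPart_eq_of_subset (B := Q)
    fun x hx => ⟨hx.1, hQ (mem_sup_right (subset_closure hx))⟩]
  exact ⟨hv.1, hQ (mem_sup_left (mem_zpowers v))⟩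

theorem noCommonSylow_conj_pow {D : Set G} (hD : DominatesClassInter p z D) {v w : G}
    (hv : NormalizesInClass z D v A) (hvB : v ∉ classPart z B) (hw : NormalizesInClass z D w B)
    {i : ℕ} (hi : p.Coprime i) : NoCommonSylow p w (v ^ i * w * (v ^ i)⁻¹) := by
  intro C hwC hconjC
  have heq := hw.classPart_eq_classPart hD (hw.conj (pow_mem hv.mem_normalizer i)) hwC hconjC
  rw [classPart_smul] at heq
  have hvi : v ^ i ∈ normalizer (classPart z B) := mem_normalizer_iff_conj_image_eq.mpr heq.symm
  obtain ⟨k, hk⟩ := isPElement_of_mem A hv.mem.2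
  have hgen : v ∈ zpowers (v ^ i) := mem_zpowers_pow_iff.mpr <|
    (hi.symm.pow_right k).coprime_dvd_right (orderOf_dvd_of_pow_eq_one hk)
  exact hvB (mem_of_mem_normalizer_classPart hv.mem (zpowers_le.mpr hvi hgen))

-- The witnesses are `v` and the conjugates of `w` under the powers of `v`.
theorem exists_noCommonSylow (hz : IsPElement p z) (hn : ∃ Q : Sylow p G, z ∉ Q) :
    ∃ v ∈ conjugatesOf z, ∃ f : Fin p → G, (∀ i, f i ∈ conjugatesOf z) ∧
      (∀ i, NoCommonSylow p v (f i)) ∧ ∀ i j, i ≠ j → NoCommonSylow p (f i) (f j) := by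
  obtain ⟨A, B, hne, hD⟩ := exists_maximal_classPart_inter hz hn
  obtain ⟨v, hv⟩ := exists_normalizesInClass hne
  obtain ⟨w, hw⟩ := exists_normalizesInClass hne.symm
  rw [Set.inter_comm] at hw
  have hvB : v ∉ classPart z B := fun h => hv.notMem ⟨hv.mem, h⟩
  have hvw : NoCommonSylow p v w := fun C hvC hwC => hne (hv.classPart_eq_classPart hD hw hvC hwC)
  refine ⟨v, hv.mem.1, fun i => v ^ (i : ℕ) * w * (v ^ (i : ℕ))⁻¹,
    fun i => conj_mem_conjugatesOf hw.mem.1 _, fun i => ?_, fun i j hij => ?_⟩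
  · simpa [(Commute.refl v).pow_left i |>.eq, mul_assoc] using hvw.conj (v ^ (i : ℕ))
  · wlog hlt : i < j generalizing i j
    · exact (this j i hij.symm (lt_of_le_of_ne (not_lt.mp hlt) hij.symm)).symm
    have hcop : p.Coprime (j - i) := (Fact.out : p.Prime).coprime_iff_not_dvd.mpr fun hdvd => by
      have := Nat.le_of_dvd (by omega) hdvd
      omega
    have := (noCommonSylow_conj_pow hD hv hvB hw hcop).conj (v ^ (i : ℕ))
    have hpow : v ^ (i : ℕ) * v ^ (j - i : ℕ) = v ^ (j : ℕ) := by
      rw [← pow_add]; congr 1; omega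
    simpa [← hpow, mul_assoc] using this

theorem succ_mul_sylowCount_le (hz : IsPElement p z) (hn : ∃ Q : Sylow p G, z ∉ Q) :
    (p + 1) * sylowCount p z ≤ Nat.card (Sylow p G) := by
  obtain ⟨v, hv, f, hf, hvf, hff⟩ := exists_noCommonSylow hz hn
  have hcard (i) : {Q : Sylow p G | f i ∈ Q}.ncard = sylowCount p z :=
    sylowCount_eq_of_mem_conjugatesOf p (hf i)
  have hunion : (⋃ i, {Q : Sylow p G | f i ∈ Q}).ncard = p * sylowCount p z := by
    rw [Set.ncard_iUnion_of_finite (fun _ => Set.toFinite _) fun i j hij => (hff i j hij).disjoint,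
      finsum_eq_sum_of_fintype, Finset.sum_congr rfl fun i _ => hcard i, Finset.sum_const,
      Finset.card_univ, Fintype.card_fin, smul_eq_mul]
  have hdisj : Disjoint {Q : Sylow p G | v ∈ Q} (⋃ i, {Q : Sylow p G | f i ∈ Q}) :=
    Set.disjoint_iUnion_right.mpr fun i => (hvf i).disjoint
  calc (p + 1) * sylowCount p z
      = {Q : Sylow p G | v ∈ Q}.ncard + (⋃ i, {Q : Sylow p G | f i ∈ Q}).ncard := by
        rw [hunion, ← sylowCount, sylowCount_eq_of_mem_conjugatesOf p hv]
        ring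
    _ = ({Q : Sylow p G | v ∈ Q} ∪ ⋃ i, {Q : Sylow p G | f i ∈ Q}).ncard :=
        (Set.ncard_union_eq hdisj).symm
    _ ≤ Nat.card (Sylow p G) := Set.ncard_le_card _

end ConjugacyClassInSylow

section IsolatedProducts

variable {G : Type*} [Group G] {p : ℕ}

theorem normalizer_le_normalizer_centralizer (H : Subgroup G) :
    normalizer (H : Set G) ≤ normalizer (centralizer (H : Set G) : Set G) := by
  have hmem : ∀ b ∈ normalizer (H : Set G), ∀ x ∈ centralizer (H : Set G),
      b * x * b⁻¹ ∈ centralizer (H : Set G) := by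
    intro b hb x hx
    rw [mem_centralizer_iff] at hx ⊢
    intro r hr
    have hcomm : Commute (b⁻¹ * r * b) x := hx _ ((mem_set_normalizer_iff''.mp hb r).mp hr)
    simpa [mul_assoc] using ((Commute.conj_iff b).mpr hcomm).eq
  intro b hb
  refine mem_normalizer_iff.mpr fun x => ⟨hmem b hb x, fun hx => ?_⟩
  simpa [mul_assoc] using hmem b⁻¹ (inv_mem hb) _ hx

theorem mem_of_smul_sylow_eq {A : Sylow p G} {u : G} (hu : IsPElement p u) (h : u • A = A) :
    u ∈ A := by
  have hmem : u ∈ zpowers u ⊓ normalizer (A : Set G) :=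
    ⟨mem_zpowers u, Sylow.smul_eq_iff_mem_normalizer.mp h⟩
  rw [hu.isPGroup_zpowers.inf_normalizer_sylow A] at hmem
  exact hmem.2

variable [Finite G] {P : Sylow p G}

-- If `e * w` also lay in `A ≠ P`, put `R = P ⊓ A`. The `p`-group generated by `N_A(R)` and `C_G(R)`
-- contains `e`, hence lies in `P`, although `N_A(R)` properly contains `R`.
theorem IsolatedIn.mul_of_hasPCentralizer [Fact p.Prime] {e w : G} (he : IsolatedIn P e)
    (hw : ∀ x ∈ P, Commute x w) (hwP : w ∈ P) (hc : HasPCentralizer p (e * w)) :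
    IsolatedIn P (e * w) := by
  refine ⟨mul_mem he.mem hwP, fun A hA => ?_⟩
  by_contra hne
  set R : Subgroup G := P ⊓ A
  have hmemR : e * w ∈ R := ⟨mul_mem he.mem hwP, hA⟩
  have hlt : R < A := inf_lt_right.mpr fun h => hne (Sylow.ext (A.is_maximal' P.isPGroup' h).symm)
  obtain ⟨t, htA, htR, htN⟩ := exists_mem_normalizer_notMem A.isPGroup' hlt
  have hC : IsPGroup p (centralizer (R : Set G)) :=
    isPGroup_iff_forall_isPElement.mpr fun x hx =>
      hc.isPElement_of_commute (mem_centralizer_iff.mp hx _ hmemR).symm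
  have hN : IsPGroup p (A ⊓ normalizer (R : Set G) : Subgroup G) := A.isPGroup'.to_le inf_le_left
  have hNC := hN.to_sup_of_normal_right' hC
    (inf_le_right.trans (normalizer_le_normalizer_centralizer R))
  have hwC : w ∈ centralizer (R : Set G) :=
    mem_centralizer_iff.mpr fun r hr => (hw r hr.1).eq
  have heNC : e ∈ (A ⊓ normalizer (R : Set G) : Subgroup G) ⊔ centralizer (R : Set G) := by
    rw [← mul_inv_cancel_right e w]
    exact mul_mem (mem_sup_left ⟨hA, le_normalizer hmemR⟩) (inv_mem (mem_sup_right hwC))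
  exact htR ⟨he.le hNC heNC (mem_sup_left ⟨htA, htN⟩), htA⟩

-- `H` acts freely on the Sylow subgroups other than `P`.
theorem card_succ_le_card_sylow [Nontrivial (Sylow p G)] {H : Subgroup G} (hHP : H ≤ P)
    (hisol : ∀ h ∈ H, h ≠ 1 → IsolatedIn P h) : Nat.card H + 1 ≤ Nat.card (Sylow p G) := by
  obtain ⟨A, hA⟩ := exists_ne P
  have hinj : Function.Injective fun h : H => (h : G) • A := by
    intro h k hhk
    by_contra hne
    have hfix : ((k⁻¹ * h : H) : G) • A = A := by
      rw [coe_mul, mul_smul, show (h : G) • A = (k : G) • A from hhk, coe_inv, inv_smul_smul]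
    have hmem := mem_of_smul_sylow_eq (isPElement_of_mem P (hHP (k⁻¹ * h).2)) hfix
    refine hA ((hisol _ (k⁻¹ * h).2 fun h₁ => hne ?_).eq_of_mem A hmem)
    exact (inv_mul_eq_one.mp (Subtype.ext h₁)).symm
  have hP : P ∉ Set.range fun h : H => (h : G) • A := by
    rintro ⟨h, hh⟩
    refine hA (smul_left_cancel (h : G) ?_)
    rw [smul_sylow_eq_of_mem P (hHP h.2)]
    exact hh
  calc Nat.card H + 1 = (insert P (Set.range fun h : H => (h : G) • A)).ncard := by
        rw [Set.ncard_insert_of_notMem hP, ← Set.image_univ, Set.ncard_image_of_injective _ hinj,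
          Set.ncard_univ]
    _ ≤ Nat.card (Sylow p G) := Set.ncard_le_card _

end IsolatedProducts

section ExceptionalLines

variable {G : Type*} [Group G] {P : Sylow 3 G} {z : G}

/-- The `g` not normalizing `P` such that all elements of the coset `g⟨z⟩` have trivial cube,
where `z ^ 3 = 1`. -/
def exceptionalLines (P : Sylow 3 G) (z : G) : Set G :=
  {g | g • P ≠ P ∧ g ^ 3 = 1 ∧ CubeFlanked g z}

theorem exists_mem_sylow_of_mem_exceptionalLines {g : G} (hg : g ∈ exceptionalLines P z) :
    ∃ A : Sylow 3 G, A ≠ P ∧ z ∈ A ∧ g ∈ A := by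
  obtain ⟨hgP, hg₃, hflank⟩ := hg
  obtain ⟨H, hH, hgH, hzH⟩ := hflank.exists_isPGroup hg₃
  obtain ⟨A, hA⟩ := hH.exists_le_sylow
  exact ⟨A, fun h => hgP (smul_sylow_eq_of_mem P (h ▸ hA hgH)), hA hzH, hA hgH⟩

variable [Finite G]

theorem ncard_exceptionalLines_add_card_le (hz : z ∈ P) :
    (exceptionalLines P z).ncard + Nat.card P ≤ sylowCount 3 z * Nat.card P := by
  classical
  have := Fintype.ofFinite G
  have := Fintype.ofFinite (Sylow 3 G)
  have : Fact (Nat.Prime 3) := ⟨Nat.prime_three⟩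
  have hcount : ({Q : Sylow 3 G | z ∈ Q}.toFinset.erase P).card + 1 = sylowCount 3 z := by
    rw [Finset.card_erase_add_one (by simpa using hz), sylowCount, Set.ncard_eq_toFinset_card']
  have hsub : (exceptionalLines P z).toFinset ⊆
      ({Q : Sylow 3 G | z ∈ Q}.toFinset.erase P).biUnion fun A => (A : Set G).toFinset := by
    intro g hg
    obtain ⟨A, hAP, hzA, hgA⟩ := exists_mem_sylow_of_mem_exceptionalLines (Set.mem_toFinset.mp hg)
    exact Finset.mem_biUnion.mpr ⟨A, by simpa using ⟨hAP, hzA⟩, by simpa using hgA⟩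
  have hcard : (exceptionalLines P z).ncard ≤
      ({Q : Sylow 3 G | z ∈ Q}.toFinset.erase P).card * Nat.card P := by
    rw [Set.ncard_eq_toFinset_card']
    refine (Finset.card_le_card hsub).trans (Finset.card_biUnion_le_card_mul _ _ _ fun A _ => ?_)
    rw [← Set.ncard_eq_toFinset_card', ← Nat.card_coe_set_eq]
    exact (Nat.card_congr (Sylow.equiv A P).toEquiv).le
  rw [← hcount, add_one_mul]
  gcongr

end ExceptionalLines

theorem sum_card_filter_mul {G ι : Type*} [Group G] [Fintype G] [Fintype ι] (u : ι → G)
    (X : G → Prop) [DecidablePred X] :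
    ∑ g, (Finset.univ.filter fun v => X (g * u v)).card = Fintype.card ι * {g | X g}.ncard := by
  have htranslate (v : ι) :
      ∑ g, (if X (g * u v) then 1 else 0) = ∑ g, if X g then 1 else 0 :=
    Equiv.sum_comp (Equiv.mulRight (u v)) fun g => if X g then 1 else 0
  simp only [Finset.card_filter]
  rw [Finset.sum_comm, ncard_setOf_eq_sum, Finset.sum_congr rfl fun v _ => htranslate v,
    Finset.sum_const, Finset.card_univ, smul_eq_mul]

section PlaneCounting

variable {G : Type*} [Group G] {P : Sylow 3 G} {u : ZMod 3 × ZMod 3 → G} {g : G}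

theorem card_cubePoints_add_card_involutionPoints_le_nine (u : ZMod 3 × ZMod 3 → G) (g : G) :
    (cubePoints u g).card + (involutionPoints u g).card ≤ 9 := by
  rw [← Finset.card_union_of_disjoint (Finset.disjoint_right.mpr fun _ =>
    notMem_cubePoints_of_mem_involutionPoints)]
  exact (Finset.card_le_univ _).trans_eq (by simp [ZMod.card])

namespace IsSpecialPlane

variable (hu : IsSpecialPlane P u)
include hu

open Classical in
theorem card_fullColumns_cubePoints_le (hg : g • P ≠ P) :
    (fullColumns (cubePoints u g)).card ≤
      (Finset.univ.filter fun i => g * u (i, 0) ∈ exceptionalLines P (u (0, 1))).card := by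
  refine Finset.card_le_card fun i hi => Finset.mem_filter.mpr ⟨Finset.mem_univ i, ?_⟩
  have hcol (j) : (i, j) ∈ cubePoints u g :=
    mem_gridColumn.mp ((Finset.mem_filter.mp hi).2 ▸ Finset.mem_univ j)
  refine ⟨?_, mem_cubePoints.mp (hcol 0), hu.cubeFlanked ?_ ?_⟩
  · rwa [mul_smul, smul_sylow_eq_of_mem P (hu.mem _)]
  · simpa using hcol 1
  · simpa using hcol (-1)

variable [Finite G]

theorem ten_le_card_sylow [Nontrivial (Sylow 3 G)] (hz : IsolatedIn P (u (0, 1))) :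
    10 ≤ Nat.card (Sylow 3 G) := by
  have hcases : ∀ v : ZMod 3 × ZMod 3, v ≠ 0 → v.1 ≠ 0 ∨ v = (0, 1) ∨ v = -(0, 1) := by decide
  have : Fact (Nat.Prime 3) := ⟨Nat.prime_three⟩
  have hisol (v) (hv : v ≠ 0) : IsolatedIn P (u v) := by
    obtain hv₁ | rfl | rfl := hcases v hv
    · exact hu.isolatedIn v hv₁
    · exact hz
    · have hneg : u (-(0, 1)) = (u (0, 1))⁻¹ := by
        rw [eq_inv_iff_mul_eq_one, ← hu.map_add, neg_add_cancel, hu.map_zero]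
      exact hneg ▸ hz.inv
  let f : Multiplicative (ZMod 3 × ZMod 3) →* G :=
    MonoidHom.mk' (fun v => u v.toAdd) fun v w => hu.map_add _ _
  have hf : Function.Injective f := by
    refine (injective_iff_map_eq_one f).mpr fun v hv => ?_
    by_contra hne
    obtain ⟨A, hA⟩ := exists_ne P
    exact hA ((hisol v.toAdd hne).eq_of_mem A (show f v ∈ A from hv ▸ one_mem A))
  have hcard : Nat.card f.range = 9 := by
    rw [← Nat.card_congr (MonoidHom.ofInjective hf).toEquiv]
    simp
  rw [← show Nat.card f.range + 1 = 10 by rw [hcard]]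
  refine card_succ_le_card_sylow (P := P) ?_ ?_
  · rintro _ ⟨v, rfl⟩
    exact hu.mem _
  · rintro _ ⟨v, rfl⟩ hne
    exact hisol _ fun hv => hne ((congrArg u hv).trans hu.map_zero)

theorem nine_mul_ncard_le :
    9 * ({y : G | y ^ 3 = 1}.ncard + {y : G | orderOf y = 2}.ncard) ≤
      3 * Nat.card G + 6 * Nat.card (normalizer (P : Set G)) +
        6 * (exceptionalLines P (u (0, 1))).ncard := by
  classical
  have := Fintype.ofFinite G
  have hlocal (g : G) : (cubePoints u g).card + (involutionPoints u g).card ≤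
      3 + 6 * (if g ∈ normalizer (P : Set G) then 1 else 0) + 2 * (Finset.univ.filter fun i =>
        g * u (i, 0) ∈ exceptionalLines P (u (0, 1))).card := by
    split_ifs with hg
    · have := card_cubePoints_add_card_involutionPoints_le_nine u g
      omega
    · rw [← Sylow.smul_eq_iff_mem_normalizer] at hg
      have := hu.card_cubePoints_add_card_involutionPoints_le hg
      have := hu.card_fullColumns_cubePoints_le hg
      omega
  have hplane : Fintype.card (ZMod 3 × ZMod 3) = 9 := by simp [ZMod.card]
  have hcubes : ∑ g, (cubePoints u g).card = 9 * {y : G | y ^ 3 = 1}.ncard := by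
    rw [← hplane, ← sum_card_filter_mul u]
    rfl
  have hinvolutions : ∑ g, (involutionPoints u g).card = 9 * {y : G | orderOf y = 2}.ncard := by
    rw [← hplane, ← sum_card_filter_mul u]
    simp only [involutionPoints]
  have hlines := sum_card_filter_mul (fun i : ZMod 3 => u (i, 0))
    (· ∈ exceptionalLines P (u (0, 1)))
  have hnormalizer : ∑ g : G, (if g ∈ normalizer (P : Set G) then 1 else 0) =
      Nat.card (normalizer (P : Set G)) := (ncard_setOf_eq_sum _).symm
  have hsum := Finset.sum_le_sum fun g (_ : g ∈ Finset.univ) => hlocal g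
  rw [Finset.sum_add_distrib, Finset.sum_add_distrib, Finset.sum_add_distrib, ← Finset.mul_sum,
    ← Finset.mul_sum, hcubes, hinvolutions, hlines, hnormalizer, Finset.sum_const, Finset.card_univ,
    smul_eq_mul, ZMod.card, Set.ofPred_mem_eq] at hsum
  rw [Nat.card_eq_fintype_card]
  omega

end IsSpecialPlane

end PlaneCounting

section Weights

/-- The summand `4 - n` of `4|G| - ψ(G)` for an element of order `n`, lowered by `c` for
involutions. -/
def orderWeight (c : ℤ) (n : ℕ) : ℤ := 4 - n - if n = 2 then c else 0

/-- The number `4|G| - ψ(G) - c i₂(G)`, as a sum over the elements of `G`. -/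
noncomputable def weightSum (c : ℤ) (G : Type*) [Group G] : ℤ := ∑ᶠ y : G, orderWeight c (orderOf y)

/-- The two consequences of `o(G) ≤ 34479/10000` and `i₂(G) ≤ (10/99)|G|` to which
the proof is reduced. -/
structure HasSmallOrders (G : Type*) [Group G] : Prop where
  two : 7 * (Nat.card G : ℤ) ≤ 20 * weightSum 2 G
  one : 451 * (Nat.card G : ℤ) ≤ 1000 * weightSum 1 G

variable {G : Type*} [Group G]

theorem weightSum_eq_sum [Fintype G] (c : ℤ) :
    weightSum c G = ∑ y : G, orderWeight c (orderOf y) :=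
  finsum_eq_sum_of_fintype _

theorem natCast_ncard_setOf_eq_sum {α : Type*} [Fintype α] (X : α → Prop) [DecidablePred X] :
    ({y | X y}.ncard : ℤ) = ∑ y, if X y then 1 else 0 := by
  rw [ncard_setOf_eq_sum]
  push_cast
  rfl

variable [Finite G]

theorem weightSum_two_le : weightSum 2 G ≤ 3 + {y : G | orderOf y = 3}.ncard -
    {y : G | orderOf y = 5}.ncard - 2 * {y : G | 6 ≤ orderOf y}.ncard := by
  have := Fintype.ofFinite G
  have hone : ({y : G | orderOf y = 1}.ncard : ℤ) = 1 := by simp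
  rw [show (3 : ℤ) = 3 * {y : G | orderOf y = 1}.ncard by rw [hone, mul_one], weightSum_eq_sum]
  simp only [natCast_ncard_setOf_eq_sum, Finset.mul_sum]
  rw [← Finset.sum_add_distrib, ← Finset.sum_sub_distrib, ← Finset.sum_sub_distrib]
  refine Finset.sum_le_sum fun y _ => ?_
  have := orderOf_pos y
  unfold orderWeight
  split_ifs <;> omega

theorem weightSum_one_le : weightSum 1 G ≤
    2 + {y : G | y ^ 3 = 1}.ncard + {y : G | orderOf y = 2}.ncard := by
  classical
  have := Fintype.ofFinite G
  have hone : ({y : G | orderOf y = 1}.ncard : ℤ) = 1 := by simp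
  rw [show (2 : ℤ) = 2 * {y : G | orderOf y = 1}.ncard by rw [hone, mul_one], weightSum_eq_sum]
  simp only [natCast_ncard_setOf_eq_sum, Finset.mul_sum]
  rw [← Finset.sum_add_distrib, ← Finset.sum_add_distrib]
  refine Finset.sum_le_sum fun y _ => ?_
  have hpos := orderOf_pos y
  have hcube : y ^ 3 = 1 ↔ orderOf y = 1 ∨ orderOf y = 3 := by
    rw [← orderOf_dvd_iff_pow_eq_one, Nat.dvd_prime Nat.prime_three]
  simp only [hcube]
  unfold orderWeight
  split_ifs <;> omega

end Weights

section Tame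

variable {G : Type*} [Group G] {p : ℕ}

theorem eq_one_of_isPElement_of_coprime {c : G} (hc : IsPElement p c)
    (hcop : (orderOf c).Coprime p) : c = 1 := by
  obtain ⟨k, hk⟩ := hc
  exact orderOf_eq_one_iff.mp
    ((hcop.pow_right k).eq_one_of_dvd (orderOf_dvd_of_pow_eq_one hk))

/-- The elements of order `3` whose centralizer is a `3`-group. -/
def tameElements (G : Type*) [Group G] : Set G := {y | orderOf y = 3 ∧ HasPCentralizer 3 y}

theorem isPElement_of_mem_tameElements {y : G} (hy : y ∈ tameElements G) : IsPElement 3 y :=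
  isPElement_of_orderOf_eq hy.1

theorem HasPCentralizer.conj {y : G} (h : HasPCentralizer p y) (g : G) :
    HasPCentralizer p (g * y * g⁻¹) := by
  refine .of_forall fun x hx => ?_
  have hcomm : Commute (g⁻¹ * x * g) y := by
    rw [← Commute.conj_iff g]
    simpa [mul_assoc] using hx
  simpa [mul_assoc] using (h.isPElement_of_commute hcomm).conj (g := g)

theorem conj_mem_tameElements (g : G) : ∀ y ∈ tameElements G, g * y * g⁻¹ ∈ tameElements G :=
  fun y hy => ⟨(orderOf_conj g y).trans hy.1, hy.2.conj g⟩

theorem six_le_orderOf_of_isPElement_three {t : G} (ht : IsPElement 3 t) (ht₁ : t ≠ 1)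
    (ht₃ : orderOf t ≠ 3) : 6 ≤ orderOf t := by
  obtain ⟨k, hk⟩ := ht
  obtain ⟨m, -, hm⟩ := (Nat.dvd_prime_pow Nat.prime_three).mp (orderOf_dvd_of_pow_eq_one hk)
  match m with
  | 0 => exact absurd (orderOf_eq_one_iff.mp hm) ht₁
  | 1 => exact absurd hm ht₃
  | m + 2 =>
    have := Nat.one_le_pow m 3 (by norm_num)
    rw [hm, pow_add]
    omega

variable [Finite G]

theorem exists_commute_coprime_orderOf [Fact p.Prime] {y : G} (h : ¬ HasPCentralizer p y) :
    ∃ c, Commute y c ∧ c ≠ 1 ∧ (orderOf c).Coprime p := by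
  have hcent : ∃ x, Commute x y ∧ ¬ IsPElement p x := by
    by_contra! hall
    exact h (.of_forall hall)
  obtain ⟨x, hxy, hx⟩ := hcent
  set k := (Nat.card G).factorization p
  refine ⟨x ^ p ^ k, (hxy.pow_left _).symm, fun h₁ => hx ⟨k, h₁⟩, ?_⟩
  have hdvd : orderOf (x ^ p ^ k) ∣ Nat.card G / p ^ k := by
    apply orderOf_dvd_of_pow_eq_one
    rw [← pow_mul, Nat.ordProj_mul_ordCompl_eq_self, pow_card_eq_one']
  exact .coprime_dvd_left hdvd (Nat.coprime_ordCompl Fact.out Nat.card_pos.ne').symm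

theorem exists_modEq_one_pow_eq_one [Fact p.Prime] : ∃ M, M ≡ 1 [MOD p] ∧
    ∀ c : G, (orderOf c).Coprime p → c ^ M = 1 := by
  set k := (Nat.card G).factorization p
  obtain ⟨M, hMp, hM⟩ := Nat.chineseRemainder
    (Nat.coprime_ordCompl (Fact.out : p.Prime) (Nat.card_pos (α := G)).ne') 1 0
  refine ⟨M, hMp, fun c hc => orderOf_dvd_iff_pow_eq_one.mp ?_⟩
  have hcard : orderOf c ∣ p ^ k * (Nat.card G / p ^ k) := by
    rw [Nat.ordProj_mul_ordCompl_eq_self]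
    exact orderOf_dvd_natCard c
  exact ((hc.pow_right k).dvd_of_dvd_mul_left hcard).trans (Nat.modEq_zero_iff_dvd.mp hM)

-- Multiply `y` by an element of order prime to `p` commuting with it; the `p`-part of the product
-- recovers `y`.
theorem ncard_orderOf_eq_not_hasPCentralizer_le [Fact p.Prime] :
    {y : G | orderOf y = p ∧ ¬ HasPCentralizer p y}.ncard ≤
      {y : G | 2 * p ≤ orderOf y ∧ ¬ IsPElement p y}.ncard := by
  have hex (y : G) (hy : orderOf y = p ∧ ¬ HasPCentralizer p y) :=
    exists_commute_coprime_orderOf hy.2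
  choose! c hcomm hne hcop using hex
  obtain ⟨M, hM, hpow⟩ := exists_modEq_one_pow_eq_one (G := G) (p := p)
  have hrecover (y : G) (hy : orderOf y = p ∧ ¬ HasPCentralizer p y) : (y * c y) ^ M = y := by
    rw [(hcomm y hy).mul_pow, hpow _ (hcop y hy), mul_one]
    conv_rhs => rw [← pow_one y]
    exact pow_eq_pow_iff_modEq.mpr (hy.1 ▸ hM)
  refine Set.ncard_le_ncard_of_injOn (fun y => y * c y) (fun y hy => ⟨?_, fun hP => ?_⟩)
    fun a ha b hb hab => ?_
  · have htwo : 2 ≤ orderOf (c y) := by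
      have := orderOf_pos (c y)
      have := mt orderOf_eq_one_iff.mp (hne y hy)
      omega
    rw [(hcomm y hy).orderOf_mul_eq_mul_orderOf_of_coprime (hy.1 ▸ (hcop y hy).symm), hy.1,
      mul_comm]
    gcongr
  · have hy₁ : IsPElement p y := isPElement_of_orderOf_eq hy.1
    have hcP : IsPElement p (y⁻¹ * (y * c y)) :=
      hy₁.inv.mul hP ((Commute.refl y).mul_right (hcomm y hy)).inv_left
    rw [inv_mul_cancel_left] at hcP
    exact hne y hy (eq_one_of_isPElement_of_coprime hcP (hcop y hy))
  · rw [← hrecover a ha, ← hrecover b hb]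
    exact congrArg (· ^ M) hab

theorem ncard_orderOf_eq_three_eq : {y : G | orderOf y = 3}.ncard =
    (tameElements G).ncard + {y : G | orderOf y = 3 ∧ ¬ HasPCentralizer 3 y}.ncard :=
  (Set.ncard_inter_add_ncard_sdiff_eq_ncard _ {y | HasPCentralizer 3 y}).symm

theorem weightSum_two_le_ncard_tameElements :
    weightSum 2 G ≤ 3 + (tameElements G).ncard -
      {y : G | orderOf y = 3 ∧ ¬ HasPCentralizer 3 y}.ncard -
      2 * {y : G | 6 ≤ orderOf y ∧ IsPElement 3 y}.ncard := by
  have : Fact (Nat.Prime 3) := ⟨Nat.prime_three⟩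
  have hweight := weightSum_two_le (G := G)
  have hthree := ncard_orderOf_eq_three_eq (G := G)
  have hwild := ncard_orderOf_eq_not_hasPCentralizer_le (G := G) (p := 3)
  have hsix := Set.ncard_inter_add_ncard_sdiff_eq_ncard {y : G | 6 ≤ orderOf y} {y | IsPElement 3 y}
  simp only [Set.inter_def, Set.sdiff_eq, Set.compl_def, Set.mem_ofPred_eq] at hsix
  rw [show 2 * 3 = 6 by rfl] at hwild
  omega

theorem weightSum_two_le_of_notMem_tameElements {t : G} (ht : IsPElement 3 t) (ht₁ : t ≠ 1)
    (htame : t ∉ tameElements G) : weightSum 2 G ≤ 1 + (tameElements G).ncard := by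
  have hweight := weightSum_two_le_ncard_tameElements (G := G)
  by_cases ht₃ : orderOf t = 3
  · have hcent : ¬ HasPCentralizer 3 t := fun h => htame ⟨ht₃, h⟩
    have hinv : t ≠ t⁻¹ := fun h => by
      have := orderOf_dvd_of_pow_eq_one ((pow_two t).trans (mul_eq_one_iff_eq_inv.mpr h))
      rw [ht₃] at this
      omega
    have htwo : 1 < {y : G | orderOf y = 3 ∧ ¬ HasPCentralizer 3 y}.ncard :=
      (Set.one_lt_ncard).mpr ⟨t, ⟨ht₃, hcent⟩, t⁻¹,
        ⟨(orderOf_inv t).trans ht₃, fun h => hcent (inv_inv t ▸ h.inv)⟩, hinv⟩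
    omega
  · have hone : 0 < {y : G | 6 ≤ orderOf y ∧ IsPElement 3 y}.ncard :=
      (Set.ncard_pos).mpr ⟨t, six_le_orderOf_of_isPElement_three ht ht₁ ht₃, ht⟩
    omega

end Tame

section NormalizerIndexTwo

variable {G : Type*} [Group G] {z : G}

theorem one_notMem_tameElements : 1 ∉ tameElements G := fun h => by simpa using h.1

theorem card_filter_mul_pow_le_two {X : Set G} {Y : G → Prop} {g : G} (hz₃ : z ^ 3 = 1)
    (hX : ∃ j : ℕ, g * z ^ j ∉ X) [DecidablePred fun y => y ∈ X ∧ Y y] :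
    (Finset.univ.filter fun j : ZMod 3 => g * z ^ j.val ∈ X ∧ Y (g * z ^ j.val)).card ≤ 2 := by
  obtain ⟨k, hk⟩ := hX
  refine Nat.le_of_lt_succ (Finset.card_lt_univ_of_notMem (x := (k : ZMod 3)) fun h => hk ?_)
  have hmem := (Finset.mem_filter.mp h).2.1
  rwa [ZMod.val_natCast, ← pow_eq_pow_mod _ hz₃] at hmem

variable [Finite G] {P : Sylow 3 G}

-- A coset of `⟨z⟩` in `P` with an isolated element has at most two elements in `X`, each
-- contributing at most `3 + 1`; any other coset contributes at most `3`.
theorem three_mul_ncard_isolatedIn_add_ncard_le {X : Set G} (hz : z ∈ P) (hz₃ : z ^ 3 = 1)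
    (hX : ∀ x, IsolatedIn P x → ∃ j : ℕ, x * z ^ j ∉ X) :
    3 * (3 * {y | y ∈ X ∧ IsolatedIn P y}.ncard + {y | y ∈ X ∧ y ∈ P}.ncard) ≤
      8 * Nat.card P := by
  classical
  have := Fintype.ofFinite G
  have hlocal (g : G) : 3 * (Finset.univ.filter fun j : ZMod 3 =>
        g * z ^ j.val ∈ X ∧ IsolatedIn P (g * z ^ j.val)).card +
      (Finset.univ.filter fun j : ZMod 3 => g * z ^ j.val ∈ X ∧ g * z ^ j.val ∈ P).card ≤
        8 * if g ∈ P then 1 else 0 := by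
    have hmem (j : ZMod 3) : g * z ^ j.val ∈ P ↔ g ∈ P := mul_mem_cancel_right (pow_mem hz _)
    by_cases hisol : ∃ i : ZMod 3, IsolatedIn P (g * z ^ i.val)
    · obtain ⟨i, hi⟩ := hisol
      have hgX : ∃ j : ℕ, g * z ^ j ∉ X := by
        obtain ⟨k, hk⟩ := hX _ hi
        exact ⟨i.val + k, by rwa [pow_add, ← mul_assoc]⟩
      have hisolated := card_filter_mul_pow_le_two (Y := IsolatedIn P) hz₃ hgX
      have hsylow := card_filter_mul_pow_le_two (Y := (· ∈ P)) hz₃ hgX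
      rw [if_pos ((hmem i).mp hi.mem)]
      omega
    · push Not at hisol
      have hsylow := Finset.card_le_univ
        (Finset.univ.filter fun j : ZMod 3 => g * z ^ j.val ∈ X ∧ g * z ^ j.val ∈ P)
      rw [ZMod.card] at hsylow
      split_ifs with hg
      · simp only [hisol, and_false, Finset.filter_false, Finset.card_empty]
        omega
      · simp [hmem, hg, hisol]
  have hsum := Finset.sum_le_sum fun g (_ : g ∈ Finset.univ) => hlocal g
  rw [Finset.sum_add_distrib, ← Finset.mul_sum, ← Finset.mul_sum,
    sum_card_filter_mul (fun j : ZMod 3 => z ^ j.val) (fun y => y ∈ X ∧ IsolatedIn P y),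
    sum_card_filter_mul (fun j : ZMod 3 => z ^ j.val) (fun y => y ∈ X ∧ y ∈ P),
    ← ncard_setOf_eq_sum, ZMod.card] at hsum
  rw [show Nat.card P = {y : G | y ∈ P}.ncard from rfl]
  omega

theorem ncard_isolatedIn_le_two {X : Set G} (hz₃ : orderOf z = 3)
    (hP : ∀ t ∈ P, t ≠ 1 → t ∈ X) (hone : 1 ∉ X) (hz : z ∈ P)
    (hX : ∀ x, IsolatedIn P x → ∃ j : ℕ, x * z ^ j ∉ X) :
    {y | y ∈ X ∧ IsolatedIn P y}.ncard ≤ 2 := by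
  have hsub : {y | y ∈ X ∧ IsolatedIn P y} ⊆ (zpowers z : Set G) \ {1} := by
    rintro y ⟨hyX, hy⟩
    refine ⟨?_, fun h => hone (h ▸ hyX)⟩
    obtain ⟨j, hj⟩ := hX y hy
    have hyz : y * z ^ j = 1 := by
      by_contra hne
      exact hj (hP _ (mul_mem hy.mem (pow_mem hz j)) hne)
    rw [mul_eq_one_iff_eq_inv.mp hyz]
    exact inv_mem (pow_mem (mem_zpowers z) j)
  refine (Set.ncard_le_ncard hsub).trans ?_
  rw [Set.ncard_sdiff_singleton_of_mem (one_mem _), ← Nat.card_coe_set_eq]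
  exact (congrArg (· - 1) ((Nat.card_zpowers z).trans hz₃)).le

-- Otherwise `4|T| ≤ (8/3) n|P|` or, if all nontrivial elements of `P` are tame,
-- `4|T| ≤ n(|P| + 5)`, for the set `T` of tame elements and the number `n` of Sylow subgroups.
theorem HasSmallOrders.exists_isolatedIn_forall_mem_tameElements (h : HasSmallOrders G)
    (hz : z ∈ P) (hz₃ : orderOf z = 3)
    (hG : Nat.card G = 2 * (Nat.card (Sylow 3 G) * Nat.card P))
    (hn : 4 ≤ Nat.card (Sylow 3 G)) (hP : 9 ≤ Nat.card P) :
    ∃ x, IsolatedIn P x ∧ ∀ j : ℕ, x * z ^ j ∈ tameElements G := by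
  have : Fact (Nat.Prime 3) := ⟨Nat.prime_three⟩
  by_contra! hX
  have hcount := succ_mul_ncard_le P conj_mem_tameElements fun _ => isPElement_of_mem_tameElements
  have hmul := Nat.mul_le_mul hn hP
  have hseven := h.two
  rw [hG] at hseven
  push_cast at hseven
  by_cases hex : ∃ t ∈ P, t ≠ 1 ∧ t ∉ tameElements G
  · obtain ⟨t, htP, ht₁, ht⟩ := hex
    have hweight := weightSum_two_le_of_notMem_tameElements (isPElement_of_mem P htP) ht₁ ht
    have hlocal := Nat.mul_le_mul_left (Nat.card (Sylow 3 G))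
      (three_mul_ncard_isolatedIn_add_ncard_le hz (hz₃ ▸ pow_orderOf_eq_one z) hX)
    nlinarith
  · push Not at hex
    have hweight := weightSum_two_le_ncard_tameElements (G := G)
    have hisol := ncard_isolatedIn_le_two hz₃ hex one_notMem_tameElements hz hX
    have hmem := ncard_mem_add_one_le P (one_notMem_tameElements (G := G))
    have hlocal := Nat.mul_le_mul_left (Nat.card (Sylow 3 G))
      (show 3 * {y | y ∈ tameElements G ∧ IsolatedIn P y}.ncard +
        {y | y ∈ tameElements G ∧ y ∈ P}.ncard ≤ Nat.card P + 5 by omega)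
    nlinarith [Nat.mul_le_mul_left (Nat.card (Sylow 3 G)) hP]

theorem HasSmallOrders.exists_isSpecialPlane (h : HasSmallOrders G)
    (hz : z ∈ P) (hzc : ∀ x ∈ P, Commute x z) (hz₃ : orderOf z = 3)
    (hG : Nat.card G = 2 * (Nat.card (Sylow 3 G) * Nat.card P))
    (hn : 4 ≤ Nat.card (Sylow 3 G)) (hP : 9 ≤ Nat.card P) :
    ∃ u, IsSpecialPlane P u ∧ u (0, 1) = z := by
  have : Fact (Nat.Prime 3) := ⟨Nat.prime_three⟩
  obtain ⟨x, hx, htame⟩ := h.exists_isolatedIn_forall_mem_tameElements hz hz₃ hG hn hP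
  have hx₃ : x ^ 3 = 1 := by
    have := (htame 0).1
    rw [pow_zero, mul_one] at this
    exact this ▸ pow_orderOf_eq_one x
  have hz₁ : z ≠ 1 := fun h => by simp [h] at hz₃
  refine ⟨_, .of_forall_isolatedIn hx.mem hx₃ hz (hz₃ ▸ pow_orderOf_eq_one z) hz₁ hzc
    (fun j => ?_) fun j => (htame j).2, by simp [ZMod.val_one]⟩
  exact hx.mul_of_hasPCentralizer (fun y hy => (hzc y hy).pow_right j) (pow_mem hz j) (htame j).2

theorem HasSmallOrders.false_of_card_eq_two_mul (h : HasSmallOrders G)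
    (hz : z ∈ P) (hzc : ∀ x ∈ P, Commute x z) (hz₃ : orderOf z = 3)
    (hN : Nat.card (normalizer (P : Set G)) = 2 * Nat.card P)
    (hn : 4 ≤ Nat.card (Sylow 3 G)) (hP : 9 ≤ Nat.card P)
    (hzn : ∃ Q : Sylow 3 G, z ∉ Q) : False := by
  have : Fact (Nat.Prime 3) := ⟨Nat.prime_three⟩
  have hG : Nat.card G = 2 * (Nat.card (Sylow 3 G) * Nat.card P) := by
    rw [card_eq_card_sylow_mul_card_normalizer P, hN]
    ring
  obtain ⟨u, hu, rfl⟩ := h.exists_isSpecialPlane hz hzc hz₃ hG hn hP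
  have hlines := ncard_exceptionalLines_add_card_le hz
  have hplane := hu.nine_mul_ncard_le
  have hweight := weightSum_one_le (G := G)
  have hone := h.one
  have hsylow : 2118 * Nat.card (Sylow 3 G) ≤ 8000 + 6000 * sylowCount 3 (u (0, 1)) := by
    refine Nat.le_of_mul_le_mul_left (c := Nat.card P) ?_ Nat.card_pos
    rw [hN, hG] at hplane
    rw [hG] at hone
    push_cast at hone
    zify at *
    nlinarith
  by_cases hisol : IsolatedIn P (u (0, 1))
  · have : Nontrivial (Sylow 3 G) := Finite.one_lt_card_iff_nontrivial.mp (by omega)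
    have hcount := (isolatedIn_iff_sylowCount_eq_one hz).mp hisol
    have hten := hu.ten_le_card_sylow hisol
    omega
  · have hfour := succ_le_sylowCount hz hisol
    have hle := succ_mul_sylowCount_le (isPElement_of_mem P hz) hzn
    omega

end NormalizerIndexTwo

section Transfer

variable {G : Type*} [Group G] {p : ℕ} {P : Sylow p G} {x : G}

theorem IsolatedIn.eq_mk_one_of_smul_eq (hx : IsolatedIn P x)
    (hP : normalizer (P : Set G) ≤ P) {q : G ⧸ (P : Subgroup G)} (hq : x • q = q) :
    q = QuotientGroup.mk 1 := by
  obtain ⟨g, rfl⟩ := QuotientGroup.mk_surjective q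
  have hxg : g⁻¹ * x * g ∈ P := mul_assoc g⁻¹ x g ▸ QuotientGroup.eq.mp hq.symm
  have hgP : g • P = P := hx.eq_of_mem _ (mem_smul_sylow_iff.mpr hxg)
  have hg : g ∈ (P : Subgroup G) := hP (Sylow.smul_eq_iff_mem_normalizer.mp hgP)
  exact QuotientGroup.eq.mpr (by simpa using inv_mem hg)

theorem smul_mk_one_eq_of_mem {H : Subgroup G} (hx : x ∈ H) :
    x • (QuotientGroup.mk 1 : G ⧸ H) = QuotientGroup.mk 1 :=
  QuotientGroup.eq.mpr (by simpa using hx)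

theorem out_mk_orbitRel_zpowers {X : Type*} [MulAction G X] {a : X} (ha : x • a = a) :
    (Quotient.mk (MulAction.orbitRel (zpowers x) X) a).out = a := by
  obtain ⟨⟨y, hy⟩, hya⟩ := MulAction.orbitRel_apply.mp
    (Quotient.mk_out (s := MulAction.orbitRel (zpowers x) X) a)
  have hle : zpowers x ≤ MulAction.stabilizer G a := zpowers_le.mpr ha
  exact hya.symm.trans (hle hy)

variable [Finite G] [Fact p.Prime] {A : Type*} [CommGroup A]

-- The other `⟨x⟩`-orbits on `G ⧸ P` have length `p`, so they contribute conjugates of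
-- `x ^ p = 1` to the transfer.
theorem IsolatedIn.transfer_eq (hx : IsolatedIn P x) (hP : normalizer (P : Set G) ≤ P)
    (hxp : x ^ p = 1) (ϕ : (P : Subgroup G) →* A) :
    MonoidHom.transfer ϕ x = ϕ ⟨x, hx.mem⟩ := by
  classical
  have := Fintype.ofFinite (Quotient (MulAction.orbitRel (zpowers x) (G ⧸ (P : Subgroup G))))
  set base : G ⧸ (P : Subgroup G) := QuotientGroup.mk 1
  have hbase : x • base = base := smul_mk_one_eq_of_mem hx.mem
  set baseOrbit := Quotient.mk (MulAction.orbitRel (zpowers x) (G ⧸ (P : Subgroup G))) base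
  have hout : baseOrbit.out = base := out_mk_orbitRel_zpowers hbase
  rw [MonoidHom.transfer_eq_prod_quotient_orbitRel_zpowers_quot, Fintype.prod_eq_single baseOrbit]
  · have hper : Function.minimalPeriod (x • ·) baseOrbit.out = 1 :=
      Function.minimalPeriod_eq_one_iff_isFixedPt.mpr (hout.symm ▸ hbase)
    have hmem : baseOrbit.out.out ∈ (P : Subgroup G) := by
      have : QuotientGroup.mk baseOrbit.out.out = base := by rw [QuotientGroup.out_eq', hout]
      simpa using inv_mem (QuotientGroup.eq.mp this)
    trans ϕ ((⟨baseOrbit.out.out, hmem⟩ : (P : Subgroup G))⁻¹ * ⟨x, hx.mem⟩ *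
      ⟨baseOrbit.out.out, hmem⟩)
    · congr 1
      exact Subtype.ext (by simp [hper])
    · rw [map_mul, map_mul, map_inv, mul_comm, mul_inv_cancel_left]
  · intro q hq
    have hper : Function.minimalPeriod (x • ·) q.out = p := by
      have hdvd : Function.minimalPeriod (x • ·) q.out ∣ p := by
        refine Function.IsPeriodicPt.minimalPeriod_dvd ?_
        rw [Function.IsPeriodicPt, Function.IsFixedPt, smul_iterate, hxp]
        exact one_smul G q.out
      refine ((Nat.dvd_prime Fact.out).mp hdvd).resolve_left fun h => hq ?_
      rw [← q.out_eq, hx.eq_mk_one_of_smul_eq hP (Function.minimalPeriod_eq_one_iff_isFixedPt.mp h)]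
    rw [← map_one ϕ]
    congr 1
    exact Subtype.ext (by simp [hper, hxp])

end Transfer

section PGroups

variable {p : ℕ} [Fact p.Prime] {P : Type*} [Group P] [Finite P]

theorem exists_mem_center_orderOf_eq [Nontrivial P] (hP : IsPGroup p P) :
    ∃ z ∈ center P, orderOf z = p := by
  have hcenter : Nontrivial (center P) := hP.center_nontrivial
  obtain ⟨m, hm, hcard⟩ := (hP.to_subgroup (center P)).nontrivial_iff_card.mp hcenter
  obtain ⟨z, hz⟩ := exists_prime_orderOf_dvd_card' (G := center P) p
    (hcard ▸ dvd_pow_self p hm.ne')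
  exact ⟨z, z.2, by rw [orderOf_coe, hz]⟩

theorem exists_normal_index_eq_pow {k m : ℕ} (hcard : Nat.card P = p ^ (k + m)) :
    ∃ N : Subgroup P, N.Normal ∧ N.index = p ^ m := by
  induction k generalizing P with
  | zero => exact ⟨⊥, inferInstance, by rw [index_bot, hcard, zero_add]⟩
  | succ k ih =>
    have : Nontrivial P := by
      rw [← Finite.one_lt_card_iff_nontrivial, hcard]
      exact Nat.one_lt_pow (by lia) (Fact.out : p.Prime).one_lt
    obtain ⟨z, hz, hzp⟩ := exists_mem_center_orderOf_eq (IsPGroup.of_card hcard)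
    have hnormal : (zpowers z).Normal :=
      ⟨fun y hy g => by rwa [mem_center_iff.mp (zpowers_le.mpr hz hy) g, mul_inv_cancel_right]⟩
    have hquot : Nat.card (P ⧸ zpowers z) = p ^ (k + m) := by
      have hmul := card_eq_card_quotient_mul_card_subgroup (zpowers z)
      rw [hcard, Nat.card_zpowers, hzp, Nat.succ_add, pow_succ] at hmul
      exact Nat.eq_of_mul_eq_mul_right (Fact.out : p.Prime).pos hmul.symm
    obtain ⟨N, hN, hindex⟩ := ih hquot
    exact ⟨N.comap (QuotientGroup.mk' _), inferInstance,
      by rw [index_comap_of_surjective _ (QuotientGroup.mk'_surjective _), hindex]⟩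

theorem sq_mul_card_commutator_le (hP : IsPGroup p P) (hcard : p ^ 2 ≤ Nat.card P) :
    p ^ 2 * Nat.card (commutator P) ≤ Nat.card P := by
  obtain ⟨m, hm⟩ := IsPGroup.iff_card.mp hP
  have hm₂ : 2 ≤ m := (Nat.pow_le_pow_iff_right (Fact.out : p.Prime).one_lt).mp (hm ▸ hcard)
  obtain ⟨N, hN, hindex⟩ := exists_normal_index_eq_pow (m := 2) (k := m - 2)
    (by rw [hm, Nat.sub_add_cancel hm₂])
  have hcomm : IsMulCommutative (P ⧸ N) := IsPGroup.isMulCommutative_of_card_eq_prime_sq hindex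
  calc p ^ 2 * Nat.card (commutator P) ≤ N.index * Nat.card N := by
        rw [hindex]
        exact Nat.mul_le_mul_left _ (card_le_of_le
          (Normal.quotient_commutative_iff_commutator_le.mp hcomm))
    _ = Nat.card P := N.index_mul_card

end PGroups

section Solvability

variable {G : Type*} [Group G]

theorem isMulCommutative_normalClosure_singleton {a : G}
    (h : ∀ b, Commute a (b * a * b⁻¹)) : IsMulCommutative (normalClosure {a}) := by
  refine isMulCommutative_closure fun x hx y hy => ?_
  simp only [Group.mem_conjugatesOfSet_iff, Set.mem_singleton_iff, exists_eq_left,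
    isConj_iff] at hx hy
  obtain ⟨c, rfl⟩ := hx
  obtain ⟨d, rfl⟩ := hy
  have hconj : c * (c⁻¹ * d * a * (c⁻¹ * d)⁻¹) * c⁻¹ = d * a * d⁻¹ := by group
  exact hconj ▸ (h (c⁻¹ * d)).conj c

variable [Finite G]

theorem card_quotient_lt {N : Subgroup G} (hN : N ≠ ⊥) : Nat.card (G ⧸ N) < Nat.card G := by
  rw [card_eq_card_quotient_mul_card_subgroup N]
  exact lt_mul_of_one_lt_right Nat.card_pos (one_lt_card_iff_ne_bot N |>.mpr hN)

theorem isSolvable_of_commute_conj (h : ∀ a b : G, Commute a (b * a * b⁻¹)) :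
    Group.IsSolvable G := by
  induction hn : Nat.card G using Nat.strong_induction_on generalizing G with
  | _ n ih =>
  subst hn
  rcases subsingleton_or_nontrivial G with _ | _
  · infer_instance
  obtain ⟨a, ha⟩ := exists_ne (1 : G)
  have hN : normalClosure {a} ≠ ⊥ := fun hbot =>
    ha ((eq_bot_iff_forall _).mp hbot a (subset_normalClosure rfl))
  have hquot : Group.IsSolvable (G ⧸ normalClosure {a}) := by
    refine ih _ (card_quotient_lt hN) (fun x y => ?_) rfl
    obtain ⟨x, rfl⟩ := QuotientGroup.mk_surjective x
    obtain ⟨y, rfl⟩ := QuotientGroup.mk_surjective y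
    exact (h x y).map (QuotientGroup.mk' _)
  have hclosure : Group.IsSolvable (normalClosure {a}) :=
    Group.isSolvable_of_comm (isMulCommutative_normalClosure_singleton (h a)).is_comm.comm
  exact (Group.isSolvable_iff_subgroup_quotient _).mpr ⟨hclosure, hquot⟩

variable {K : Subgroup G} [K.Normal] {x : G}

omit [Finite G] in
theorem cubeFlanked_of_mem (h : ∀ k ∈ K, (k * x) ^ 3 = 1) {a k : G} (ha : a ∈ K) (hk : k ∈ K) :
    CubeFlanked a (k * x) where
  dir := h k hk
  right := by rw [← mul_assoc]; exact h _ (mul_mem ha hk)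
  left := by
    have hinv : a * (k * x)⁻¹ = (k * (x * a⁻¹ * x⁻¹) * x)⁻¹ := by group
    rw [hinv, inv_pow, h _ (mul_mem hk (Normal.conj_mem inferInstance _ (inv_mem ha) x)), inv_one]

-- Conjugates of `a` by elements of the cosets `K * x` and `K * x⁻¹` commute with `a`, and by
-- `conjNorm_eq_one` a conjugate by an element of `K` is the inverse of a product of two of them.
theorem isSolvable_of_forall_mul_pow_three (h : ∀ k ∈ K, (k * x) ^ 3 = 1) :
    Group.IsSolvable K := by
  refine isSolvable_of_commute_conj fun ⟨a, ha⟩ ⟨b, hb⟩ => Subtype.ext ?_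
  change Commute a (b * a * b⁻¹)
  have hb' : x * b⁻¹ * x⁻¹ ∈ K := Normal.conj_mem inferInstance _ (inv_mem hb) x
  have hright : Commute a (b * x * a * (b * x)⁻¹) := (cubeFlanked_of_mem h ha hb).commute_conj
  have hleft : Commute a ((x * b⁻¹ * x⁻¹ * x)⁻¹ * a * (x * b⁻¹ * x⁻¹ * x)⁻¹⁻¹) :=
    (cubeFlanked_of_mem h ha hb').inv.commute_conj
  have hnorm : a * (x * a * x⁻¹) * (x⁻¹ * a * x) = 1 := by
    simpa only [one_mul, conjNorm] using (cubeFlanked_of_mem h ha (one_mem K)).conjNorm_eq_one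
  have hfactor : b * a * b⁻¹ = (b * x * a * (b * x)⁻¹ *
      ((x * b⁻¹ * x⁻¹ * x)⁻¹ * a * (x * b⁻¹ * x⁻¹ * x)⁻¹⁻¹))⁻¹ := by
    rw [mul_assoc, ← eq_inv_iff_mul_eq_one] at hnorm
    calc b * a * b⁻¹ = b * ((x * a * x⁻¹) * (x⁻¹ * a * x))⁻¹ * b⁻¹ := by rw [← hnorm]
      _ = _ := by group
  rw [hfactor]
  exact (hright.mul_right hleft).inv_right

end Solvability

section PResidual

/-- The `p`-residual `O^p(G)`, generated by the elements of order prime to `p`. -/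
def pResidual (p : ℕ) (G : Type*) [Group G] : Subgroup G :=
  closure {g : G | (orderOf g).Coprime p}

variable {G : Type*} [Group G] {p : ℕ}

theorem pResidual_le_ker {A : Type*} [Group A] (hA : IsPGroup p A) (f : G →* A) :
    pResidual p G ≤ f.ker := by
  refine (closure_le _).mpr fun g hg => ?_
  obtain ⟨k, hk⟩ := hA (f g)
  have hdvd : orderOf (f g) ∣ Nat.gcd (orderOf g) (p ^ k) :=
    Nat.dvd_gcd (orderOf_map_dvd f g) (orderOf_dvd_of_pow_eq_one hk)
  rw [Nat.Coprime.pow_right k hg] at hdvd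
  exact orderOf_eq_one_iff.mp (Nat.dvd_one.mp hdvd)

theorem map_pResidual_le {A : Type*} [Group A] (f : G →* A) :
    (pResidual p G).map f ≤ pResidual p A := by
  rw [pResidual, MonoidHom.map_closure]
  refine closure_mono ?_
  rintro _ ⟨g, hg, rfl⟩
  exact Nat.Coprime.coprime_dvd_left (orderOf_map_dvd f g) hg

theorem pResidual_quotient_eq_top (N : Subgroup G) [N.Normal] (h : pResidual p G = ⊤) :
    pResidual p (G ⧸ N) = ⊤ := by
  have := map_pResidual_le (p := p) (QuotientGroup.mk' N)
  rwa [h, ← MonoidHom.range_eq_map, QuotientGroup.range_mk', top_le_iff] at this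

instance pResidual_normal : (pResidual p G).Normal where
  conj_mem _ hy g := map_pResidual_le (MulAut.conj g).toMonoidHom (mem_map_of_mem _ hy)

theorem subgroupOf_pResidual_le {H : Subgroup G} (hH : pResidual p G ≤ H) :
    (pResidual p G).subgroupOf H ≤ pResidual p H := by
  have hle : pResidual p G ≤ (pResidual p H).map H.subtype :=
    (closure_le _).mpr fun g hg =>
      ⟨⟨g, hH (subset_closure hg)⟩, subset_closure (by simpa using hg), rfl⟩
  intro y hy
  obtain ⟨z, hz, hzy⟩ := hle (mem_subgroupOf.mp hy)
  exact Subtype.ext hzy ▸ hz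

theorem pResidual_pResidual : pResidual p (pResidual p G) = ⊤ := by
  simpa using subgroupOf_pResidual_le (le_refl (pResidual p G))

variable [Fact p.Prime]

theorem dvd_orderOf_of_notMem_pResidual {y : G} (hy : y ∉ pResidual p G) : p ∣ orderOf y := by
  by_contra h
  exact hy (subset_closure ((Nat.Prime.coprime_iff_not_dvd Fact.out).mpr h).symm)

theorem isPGroup_quotient_pResidual [Finite G] : IsPGroup p (G ⧸ pResidual p G) := by
  intro q
  obtain ⟨y, rfl⟩ := QuotientGroup.mk_surjective q
  refine ⟨(orderOf y).factorization p, ?_⟩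
  rw [← QuotientGroup.mk_pow, QuotientGroup.eq_one_iff]
  refine subset_closure ?_
  rw [Set.mem_ofPred_eq, orderOf_pow_of_dvd (by simp [(Fact.out : p.Prime).ne_zero])
    (Nat.ordProj_dvd _ p)]
  exact (Nat.coprime_ordCompl Fact.out (orderOf_pos y).ne').symm

end PResidual

section SelfNormalizingSylow

variable {G : Type*} [Group G] {p : ℕ} {P : Sylow p G} {x y : G}

theorem normalizer_le_of_normalizerIndex_eq_one (h : normalizerIndex P = 1) :
    normalizer (P : Set G) ≤ P := by
  rwa [normalizerIndex, relIndex_eq_one] at h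

theorem isolatedIn_of_card_eq_prime [Fact p.Prime] (hP : Nat.card P = p) (hy : y ∈ P)
    (hy₁ : y ≠ 1) : IsolatedIn P y where
  mem := hy
  eq_of_mem Q hQ := by
    have hle : (P : Subgroup G) ≤ Q := fun x hx => by
      have hmem : (⟨x, hx⟩ : (P : Subgroup G)) ∈ zpowers ⟨y, hy⟩ :=
        mem_zpowers_of_prime_card hP fun h => hy₁ (congrArg Subtype.val h)
      obtain ⟨k, hk⟩ := hmem
      have hk' : y ^ k = x := congrArg Subtype.val hk
      exact hk' ▸ zpow_mem hQ k
    exact Sylow.ext (P.is_maximal' Q.isPGroup' hle)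

variable [Finite G]

theorem mem_commutator_of_transfer_eq {w : (P : Subgroup G)} (hx : x ∈ pResidual p G)
    (hw : MonoidHom.transfer Abelianization.of x = Abelianization.of w) :
    (w : G) ∈ ⁅(P : Subgroup G), (P : Subgroup G)⁆ := by
  have hab : IsPGroup p (Abelianization (P : Subgroup G)) := P.isPGroup'.to_quotient _
  rw [← map_subtype_commutator, ← Abelianization.ker_of]
  refine mem_map_of_mem _ (hw.symm.trans ?_)
  exact pResidual_le_ker hab (MonoidHom.transfer Abelianization.of) hx

variable [Fact p.Prime]

theorem IsolatedIn.mem_commutator (hx : IsolatedIn P x) (hP : normalizer (P : Set G) ≤ P)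
    (hxp : x ^ p = 1) (hres : x ∈ pResidual p G) : x ∈ ⁅(P : Subgroup G), (P : Subgroup G)⁆ :=
  mem_commutator_of_transfer_eq hres (hx.transfer_eq hP hxp _)

theorem IsolatedIn.mul_inv_mem_commutator (hx : IsolatedIn P x) (hy : IsolatedIn P y)
    (hP : normalizer (P : Set G) ≤ P) (hxp : x ^ p = 1) (hyp : y ^ p = 1)
    (hres : x * y⁻¹ ∈ pResidual p G) : x * y⁻¹ ∈ ⁅(P : Subgroup G), (P : Subgroup G)⁆ := by
  refine mem_commutator_of_transfer_eq (w := ⟨x, hx.mem⟩ * ⟨y, hy.mem⟩⁻¹) hres ?_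
  rw [map_mul, map_mul, map_inv, map_inv, hx.transfer_eq hP hxp, hy.transfer_eq hP hyp]

theorem card_eq_or_sq_le_card (hP : (P : Subgroup G) ≠ ⊥) :
    Nat.card P = p ∨ p ^ 2 ≤ Nat.card P := by
  obtain ⟨m, hm⟩ := IsPGroup.iff_card.mp P.isPGroup'
  have hp : 0 < p := (Fact.out : p.Prime).pos
  match m with
  | 0 => exact absurd (card_eq_one.mp hm) hP
  | 1 => exact .inl (hm.trans (pow_one p))
  | m + 2 => exact .inr (hm.symm ▸ Nat.pow_le_pow_right hp (by lia))

theorem sq_mul_card_commutator_sylow_le (hP : p ^ 2 ≤ Nat.card P) :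
    p ^ 2 * Nat.card (⁅(P : Subgroup G), (P : Subgroup G)⁆ : Subgroup G) ≤ Nat.card P := by
  have := sq_mul_card_commutator_le P.isPGroup' hP
  rwa [← map_subtype_commutator, card_map_of_injective (subtype_injective _)]

end SelfNormalizingSylow

section QuotientWeights

variable {G : Type*} [Group G] {c : ℤ}

theorem orderWeight_le_of_dvd (hc₀ : 0 ≤ c) (hc₂ : c ≤ 2) {d n : ℕ} (hn : 0 < n) (hd : d ∣ n) :
    orderWeight c n ≤ orderWeight c d := by
  have hle := Nat.le_of_dvd hn hd
  have htwo : d = 2 → n = 2 ∨ 4 ≤ n := by rintro rfl; lia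
  unfold orderWeight
  split_ifs <;> lia

theorem sum_quotient_mk [Fintype G] (N : Subgroup G) [Fintype (G ⧸ N)] (f : G ⧸ N → ℤ) :
    ∑ y : G, f y = Nat.card N * ∑ q, f q := by
  classical
  rw [Finset.mul_sum, ← Finset.sum_fiberwise' Finset.univ (fun y : G => (y : G ⧸ N))]
  refine Finset.sum_congr rfl fun q _ => ?_
  have hfiber : Finset.card {y : G | (y : G ⧸ N) = q} = Nat.card N := by
    rw [← Fintype.card_subtype, ← Nat.card_eq_fintype_card]
    exact (QuotientGroup.card_preimage_mk N {q}).trans (by simp)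
  rw [Finset.sum_const, nsmul_eq_mul, hfiber]

variable [Finite G]

theorem weightSum_le_card_mul (hc₀ : 0 ≤ c) (hc₂ : c ≤ 2) (N : Subgroup G) [N.Normal] :
    weightSum c G ≤ Nat.card N * weightSum c (G ⧸ N) := by
  have := Fintype.ofFinite G
  have := Fintype.ofFinite (G ⧸ N)
  rw [weightSum_eq_sum, weightSum_eq_sum, ← sum_quotient_mk N fun q => orderWeight c (orderOf q)]
  exact Finset.sum_le_sum fun y _ => orderWeight_le_of_dvd hc₀ hc₂ (orderOf_pos y)
    (orderOf_map_dvd (QuotientGroup.mk' N) y)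

theorem HasSmallOrders.quotient (h : HasSmallOrders G) (N : Subgroup G) [N.Normal] :
    HasSmallOrders (G ⧸ N) := by
  have hcard : (Nat.card G : ℤ) = Nat.card N * Nat.card (G ⧸ N) := by
    rw [card_eq_card_quotient_mul_card_subgroup N]
    push_cast
    ring
  have hpos : (0 : ℤ) < Nat.card N := by exact_mod_cast Nat.card_pos
  have htwo := weightSum_le_card_mul (c := 2) (by norm_num) le_rfl N
  have hone := weightSum_le_card_mul (c := 1) (by norm_num) (by norm_num) N
  constructor <;> refine le_of_mul_le_mul_left ?_ hpos
  · linarith [hcard ▸ h.two]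
  · linarith [hcard ▸ h.one]

end QuotientWeights

section CardArithmetic

variable {G : Type*} [Group G] [Finite G] {p : ℕ}

theorem ncard_orderOf_eq_add_card_sylow_le [Fact p.Prime] (P : Sylow p G) :
    {y : G | orderOf y = p}.ncard + Nat.card (Sylow p G) ≤ Nat.card (Sylow p G) * Nat.card P := by
  have hone : (1 : G) ∉ {y : G | orderOf y = p} := fun h =>
    (Fact.out : p.Prime).ne_one (h.symm.trans orderOf_one)
  calc {y : G | orderOf y = p}.ncard + Nat.card (Sylow p G)
      ≤ Nat.card (Sylow p G) * {y | y ∈ {y : G | orderOf y = p} ∧ y ∈ P}.ncard +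
          Nat.card (Sylow p G) := by
        gcongr
        exact ncard_le_card_sylow_mul P (fun g y hy => (orderOf_conj g y).trans hy)
          fun _ => isPElement_of_orderOf_eq
    _ = Nat.card (Sylow p G) * ({y | y ∈ {y : G | orderOf y = p} ∧ y ∈ P}.ncard + 1) := by ring
    _ ≤ Nat.card (Sylow p G) * Nat.card P := by
        gcongr
        exact ncard_mem_add_one_le P hone

theorem totient_orderOf_le_ncard (x : G) :
    (orderOf x).totient ≤ {y : G | orderOf y = orderOf x}.ncard := by
  have := Fintype.ofFinite (zpowers x)
  have hcard : orderOf x ∣ Fintype.card (zpowers x) := by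
    rw [← Nat.card_eq_fintype_card, Nat.card_zpowers]
  rw [← IsCyclic.card_orderOf_eq_totient hcard, ← Set.ncard_coe_finset]
  refine Set.ncard_le_ncard_of_injOn Subtype.val (fun y hy => ?_) Subtype.val_injective.injOn
  simpa using hy

theorem card_sylow_mul_card_sylow {q : ℕ} [Fact p.Prime] [Fact q.Prime] (hpq : p ≠ q)
    (hG : ∀ r, r.Prime → r ∣ Nat.card G → r = p ∨ r = q) (P : Sylow p G) (Q : Sylow q G) :
    Nat.card P * Nat.card Q = Nat.card G := by
  have hsupp : (Nat.card G).factorization.support ⊆ {p, q} := fun r hr => by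
    simpa using hG r (Nat.prime_of_mem_primeFactors hr) (Nat.dvd_of_mem_primeFactors hr)
  conv_rhs => rw [← Nat.prod_factorization_pow_eq_self (Nat.card_pos (α := G)).ne']
  rw [Finsupp.prod_of_support_subset _ hsupp _ fun _ _ => pow_zero _, Finset.prod_pair hpq,
    P.card_eq_multiplicity, Q.card_eq_multiplicity]

theorem index_normalCore_dvd_factorial (H : Subgroup G) :
    H.normalCore.index ∣ H.index.factorial := by
  rw [normalCore_eq_ker, index_ker, index_eq_card, ← Nat.card_perm]
  exact card_subgroup_dvd_card _

theorem isSolvable_of_isPGroup [Fact p.Prime] (hG : IsPGroup p G) : Group.IsSolvable G :=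
  have := hG.isNilpotent
  inferInstance

end CardArithmetic

section SmallOrders

variable {G : Type*} [Group G] [Finite G] {P : Sylow 3 G}

theorem HasSmallOrders.normalizerIndex_le_two (h : HasSmallOrders G)
    (hn : 4 ≤ Nat.card (Sylow 3 G)) : normalizerIndex P ≤ 2 := by
  have : Fact (Nat.Prime 3) := ⟨Nat.prime_three⟩
  by_contra! hν
  have hcard := card_eq_card_sylow_mul_card_normalizer P
  rw [card_normalizer_eq] at hcard
  have hthree := ncard_orderOf_eq_add_card_sylow_le P
  have hweight := weightSum_two_le (G := G)
  have htwo := h.two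
  have hmul : Nat.card (Sylow 3 G) * (3 * Nat.card P) ≤
      Nat.card (Sylow 3 G) * (normalizerIndex P * Nat.card P) := by gcongr; exact hν
  have hpos := Nat.mul_le_mul hn (Nat.card_pos (α := P))
  rw [← hcard, mul_left_comm] at hmul
  omega

theorem ncard_orderOf_three_isolatedIn_add_one_le (hres : pResidual 3 G = ⊤)
    (hP : normalizerIndex P = 1) :
    {y | y ∈ {y : G | orderOf y = 3} ∧ IsolatedIn P y}.ncard + 1 ≤
      Nat.card (⁅(P : Subgroup G), (P : Subgroup G)⁆ : Subgroup G) := by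
  have : Fact (Nat.Prime 3) := ⟨Nat.prime_three⟩
  have hone : (1 : G) ∉ {y | y ∈ {y : G | orderOf y = 3} ∧ IsolatedIn P y} := fun h => by
    simpa using h.1
  rw [← Set.ncard_insert_of_notMem hone]
  refine Set.ncard_le_ncard (Set.insert_subset (one_mem _) fun y ⟨hy₃, hy⟩ => ?_)
  exact hy.mem_commutator (normalizer_le_of_normalizerIndex_eq_one hP)
    (orderOf_dvd_iff_pow_eq_one.mp (dvd_of_eq hy₃)) (hres ▸ mem_top y)

theorem HasSmallOrders.normalizerIndex_ne_one (h : HasSmallOrders G) (hres : pResidual 3 G = ⊤)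
    (hn : 4 ≤ Nat.card (Sylow 3 G)) (hP : (P : Subgroup G) ≠ ⊥) : normalizerIndex P ≠ 1 := by
  have : Fact (Nat.Prime 3) := ⟨Nat.prime_three⟩
  intro hν
  rcases card_eq_or_sq_le_card hP with hP₃ | hP₉
  · obtain ⟨x, hx, hx₁⟩ := (bot_or_exists_ne_one (P : Subgroup G)).resolve_left hP
    have := isCyclic_of_prime_card hP₃
    have hcomm : ⁅(P : Subgroup G), (P : Subgroup G)⁆ = ⊥ := by
      rw [commutator_eq_bot_iff_le_centralizer, le_centralizer_iff_isMulCommutative]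
      exact IsCyclic.isMulCommutative
    have hx₃ : x ^ 3 = 1 := by
      rw [← hP₃]
      exact congrArg Subtype.val (pow_card_eq_one' (x := (⟨x, hx⟩ : P)))
    refine hx₁ (mem_bot.mp (hcomm ▸ ?_))
    exact (isolatedIn_of_card_eq_prime hP₃ hx hx₁).mem_commutator
      (normalizer_le_of_normalizerIndex_eq_one hν) hx₃ (hres ▸ mem_top x)
  · have hcard := card_eq_card_sylow_mul_card_normalizer P
    rw [card_normalizer_eq, hν, one_mul] at hcard
    have hcount := succ_mul_ncard_le P (X := {y : G | orderOf y = 3})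
      (fun g y hy => (orderOf_conj g y).trans hy) fun _ => isPElement_of_orderOf_eq
    have hisol := ncard_orderOf_three_isolatedIn_add_one_le hres hν
    have hmem := ncard_mem_add_one_le P (X := {y : G | orderOf y = 3}) (by simp)
    have hcomm := sq_mul_card_commutator_sylow_le hP₉
    have hlocal := Nat.mul_le_mul_left (Nat.card (Sylow 3 G))
      (show 3 * (3 * {y | y ∈ {y : G | orderOf y = 3} ∧ IsolatedIn P y}.ncard +
        {y | y ∈ {y : G | orderOf y = 3} ∧ y ∈ P}.ncard) + 12 ≤ 4 * Nat.card P by omega)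
    have hweight := weightSum_two_le (G := G)
    have htwo := h.two
    rw [mul_add, mul_left_comm, mul_left_comm _ 4, ← hcard] at hlocal
    omega

theorem HasSmallOrders.orderOf_le_four (h : HasSmallOrders G) (hn : 4 ≤ Nat.card (Sylow 3 G))
    (hν : normalizerIndex P = 2) (hP : Nat.card P = 3) (x : G) : orderOf x ≤ 4 := by
  have : Fact (Nat.Prime 3) := ⟨Nat.prime_three⟩
  by_contra! hx
  have hcard := card_eq_card_sylow_mul_card_normalizer P
  have hthree := ncard_orderOf_eq_add_card_sylow_le P
  have hweight := weightSum_two_le (G := G)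
  have htwo := h.two
  rw [card_normalizer_eq, hν, hP] at hcard
  rw [hP] at hthree
  rcases (Nat.succ_le_iff.mpr hx).eq_or_lt with hx₅ | hx₆
  · have hfive := totient_orderOf_le_ncard x
    rw [show orderOf x = 5 from hx₅.symm, Nat.totient_prime Nat.prime_five] at hfive
    omega
  · have hinv : x ≠ x⁻¹ := fun heq => by
      have := orderOf_le_of_pow_eq_one two_pos ((pow_two x).trans (mul_eq_one_iff_eq_inv.mpr heq))
      omega
    have hsix : 1 < {y : G | 6 ≤ orderOf y}.ncard :=
      (Set.one_lt_ncard).mpr ⟨x, hx₆, x⁻¹, hx₆.trans_eq (orderOf_inv x).symm, hinv⟩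
    omega

theorem HasSmallOrders.three_ne_card_sylow (h : HasSmallOrders G)
    (hns : ∀ N : Subgroup G, N.Normal → Group.IsSolvable N → N = ⊥)
    (hn : 4 ≤ Nat.card (Sylow 3 G)) (hν : normalizerIndex P = 2) : Nat.card P ≠ 3 := by
  have : Fact (Nat.Prime 3) := ⟨Nat.prime_three⟩
  intro hP
  let Q : Sylow 2 G := default
  have hprime (r : ℕ) (hr : r.Prime) (hdvd : r ∣ Nat.card G) : r = 3 ∨ r = 2 := by
    have := Fact.mk hr
    obtain ⟨x, rfl⟩ := exists_prime_orderOf_dvd_card' r hdvd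
    have := h.orderOf_le_four hn hν hP x
    interval_cases orderOf x <;> simp_all +decide
  have hindex : (Q : Subgroup G).index = 3 := by
    have hmul := (card_mul_index (Q : Subgroup G)).trans
      (card_sylow_mul_card_sylow (by decide) hprime P Q).symm
    rw [hP, mul_comm] at hmul
    exact Nat.eq_of_mul_eq_mul_right Nat.card_pos hmul
  have hcore : (Q : Subgroup G).normalCore = ⊥ :=
    hns _ inferInstance (isSolvable_of_isPGroup (Q.isPGroup'.to_le (normalCore_le _)))
  have hdvd := index_normalCore_dvd_factorial (Q : Subgroup G)
  rw [hcore, hindex, index_bot] at hdvd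
  have hcard := card_eq_card_sylow_mul_card_normalizer P
  rw [card_normalizer_eq, hν, hP] at hcard
  have := Nat.le_of_dvd (by decide) hdvd
  norm_num [Nat.factorial] at this
  omega

theorem HasSmallOrders.isSolvable_of_not_three_dvd (h : HasSmallOrders G)
    (hG : ¬ 3 ∣ Nat.card G) : Group.IsSolvable G := by
  have hthree : {y : G | orderOf y = 3} = ∅ :=
    Set.eq_empty_of_forall_notMem fun y hy => hG (hy ▸ orderOf_dvd_natCard y)
  have hweight := weightSum_two_le (G := G)
  have htwo := h.two
  rw [hthree, Set.ncard_empty] at hweight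
  have hle : Nat.card G ≤ 8 := by omega
  have hpow : ∃ p k, p.Prime ∧ Nat.card G = p ^ k := by
    have hpos := Nat.card_pos (α := G)
    have hcases : Nat.card G = 2 ^ 0 ∨ Nat.card G = 2 ^ 1 ∨ Nat.card G = 2 ^ 2 ∨
        Nat.card G = 5 ^ 1 ∨ Nat.card G = 7 ^ 1 ∨ Nat.card G = 2 ^ 3 := by omega
    obtain hk | hk | hk | hk | hk | hk := hcases
    exacts [⟨2, 0, by decide, hk⟩, ⟨2, 1, by decide, hk⟩, ⟨2, 2, by decide, hk⟩,
      ⟨5, 1, by decide, hk⟩, ⟨7, 1, by decide, hk⟩, ⟨2, 3, by decide, hk⟩]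
  obtain ⟨p, k, hp, hk⟩ := hpow
  have := Fact.mk hp
  exact isSolvable_of_isPGroup (.of_card hk)

theorem four_le_card_sylow_three (hP : ¬ (P : Subgroup G).Normal) :
    4 ≤ Nat.card (Sylow 3 G) := by
  have : Fact (Nat.Prime 3) := ⟨Nat.prime_three⟩
  have hmod := card_sylow_modEq_one 3 G
  have hne : Nat.card (Sylow 3 G) ≠ 1 := fun h => by
    have := (Nat.card_eq_one_iff_unique.mp h).1
    exact hP (Sylow.normal_of_subsingleton P)
  rw [Nat.ModEq] at hmod
  omega

theorem HasSmallOrders.isSolvable_of_forall_normal (h : HasSmallOrders G)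
    (hres : pResidual 3 G = ⊤) (hns : ∀ N : Subgroup G, N.Normal → Group.IsSolvable N → N = ⊥) :
    Group.IsSolvable G := by
  have : Fact (Nat.Prime 3) := ⟨Nat.prime_three⟩
  let P : Sylow 3 G := default
  by_contra hG
  have hdvd : 3 ∣ Nat.card G := by
    by_contra hdvd
    exact hG (h.isSolvable_of_not_three_dvd hdvd)
  have hP : (P : Subgroup G) ≠ ⊥ := P.ne_bot_of_dvd_card hdvd
  have hn : 4 ≤ Nat.card (Sylow 3 G) :=
    four_le_card_sylow_three fun hN => hP (hns _ hN (isSolvable_of_isPGroup P.isPGroup'))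
  have hν : normalizerIndex P = 2 := by
    have := h.normalizerIndex_le_two (P := P) hn
    have := h.normalizerIndex_ne_one hres hn hP
    have : normalizerIndex P ≠ 0 := index_ne_zero_of_finite
    omega
  have hP₉ : 9 ≤ Nat.card P :=
    (card_eq_or_sq_le_card hP).resolve_left (h.three_ne_card_sylow hns hn hν)
  have := (nontrivial_iff_ne_bot _).mpr hP
  obtain ⟨z, hzc, hz₃⟩ := exists_mem_center_orderOf_eq P.isPGroup'
  have hz : ∃ Q : Sylow 3 G, (z : G) ∉ Q := by
    by_contra! hall
    have hcore : (z : G) ∈ (P : Subgroup G).normalCore := fun g => by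
      have := mem_smul_sylow_iff.mp (hall (g⁻¹ • P))
      rwa [inv_inv] at this
    rw [hns _ inferInstance (isSolvable_of_isPGroup (P.isPGroup'.to_le (normalCore_le _))),
      mem_bot, ← orderOf_eq_one_iff, orderOf_coe] at hcore
    omega
  exact h.false_of_card_eq_two_mul z.2
    (fun x hx => congrArg Subtype.val (mem_center_iff.mp hzc ⟨x, hx⟩)) (by rwa [orderOf_coe])
    (hν ▸ card_normalizer_eq P) hn hP₉ hz

theorem HasSmallOrders.isSolvable_of_pResidual_eq_top {G : Type*} [Group G] [Finite G]
    (h : HasSmallOrders G) (hres : pResidual 3 G = ⊤) : Group.IsSolvable G := by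
  induction hcard : Nat.card G using Nat.strong_induction_on generalizing G with
  | _ n ih =>
    subst hcard
    by_cases hns : ∀ N : Subgroup G, N.Normal → Group.IsSolvable N → N = ⊥
    · exact h.isSolvable_of_forall_normal hres hns
    · push Not at hns
      obtain ⟨N, hN, hsolv, hne⟩ := hns
      have hquot : Group.IsSolvable (G ⧸ N) :=
        ih _ (card_quotient_lt hne) (h.quotient N) (pResidual_quotient_eq_top N hres) rfl
      exact (Group.isSolvable_iff_subgroup_quotient N).mpr ⟨hsolv, hquot⟩

end SmallOrders

section PrimeOrderCoset

variable {G : Type*} [Group G] {p : ℕ} {K : Subgroup G} {x y : G}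

/-- The set of elements of order `p` in the right coset `K x`. -/
def primeOrderCoset (p : ℕ) (K : Subgroup G) (x : G) : Set G := {y | orderOf y = p ∧ y * x⁻¹ ∈ K}

theorem mul_inv_mem_of_mem_primeOrderCoset {y' : G} (hy : y ∈ primeOrderCoset p K x)
    (hy' : y' ∈ primeOrderCoset p K x) : y * y'⁻¹ ∈ K := by
  simpa [mul_assoc] using mul_mem hy.2 (inv_mem hy'.2)

theorem notMem_of_mem_primeOrderCoset (hx : x ∉ K) (hy : y ∈ primeOrderCoset p K x) : y ∉ K :=
  fun hyK => hx ((inv_mem_iff).mp ((K.mul_mem_cancel_left hyK).mp hy.2))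

theorem commutator_le_of_index_eq_prime [Fact p.Prime] [K.Normal] (hK : K.index = p) :
    _root_.commutator G ≤ K := by
  have := isCyclic_of_prime_card (α := G ⧸ K) hK
  exact Normal.quotient_commutative_iff_commutator_le.mp IsCyclic.isMulCommutative

theorem conj_mem_primeOrderCoset (hK : _root_.commutator G ≤ K) (g : G) :
    ∀ y ∈ primeOrderCoset p K x, g * y * g⁻¹ ∈ primeOrderCoset p K x := fun y hy => by
  refine ⟨(orderOf_conj g y).trans hy.1, ?_⟩
  have hcomm : g * y * g⁻¹ * y⁻¹ ∈ K := hK (commutator_mem_commutator (mem_top g) (mem_top y))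
  simpa [mul_assoc] using mul_mem hcomm hy.2

theorem card_inf_mul_relIndex (K A : Subgroup G) :
    Nat.card (K ⊓ A : Subgroup G) * K.relIndex A = Nat.card A := by
  rw [← inf_relIndex_right, ← relIndex_bot_left, ← relIndex_bot_left]
  exact relIndex_mul_relIndex _ _ _ bot_le inf_le_right

theorem IsolatedIn.card_sylow_le_ncard [Finite G] [Fact p.Prime] {P : Sylow p G} {X : Set G}
    (hy : IsolatedIn P y) (hyX : y ∈ X) (hconj : ∀ g, ∀ y ∈ X, g * y * g⁻¹ ∈ X) :
    Nat.card (Sylow p G) ≤ X.ncard := by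
  choose g hg using fun Q => MulAction.exists_smul_eq G P Q
  have hisol (Q : Sylow p G) : IsolatedIn Q (g Q * y * (g Q)⁻¹) := by
    simpa only [hg] using isolatedIn_smul_conj_iff (g := g Q).mpr hy
  rw [← Set.ncard_univ]
  refine Set.ncard_le_ncard_of_injOn (fun Q => g Q * y * (g Q)⁻¹) (fun Q _ => hconj _ y hyX) ?_
  intro Q _ R _ (hQR : g Q * y * (g Q)⁻¹ = g R * y * (g R)⁻¹)
  exact (hisol R).eq_of_mem Q (hQR ▸ (hisol Q).mem)

variable [Finite G]

theorem ncard_coset_inter_le_card_inf (K A : Subgroup G) (x : G) :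
    {y | y * x⁻¹ ∈ K ∧ y ∈ A}.ncard ≤ Nat.card (K ⊓ A : Subgroup G) := by
  rcases Set.eq_empty_or_nonempty {y | y * x⁻¹ ∈ K ∧ y ∈ A} with hempty | ⟨y₀, hK₀, hA₀⟩
  · simp [hempty]
  · refine Set.ncard_le_ncard_of_injOn (fun y => y * y₀⁻¹) (fun y hy => ⟨?_, ?_⟩)
      (mul_left_injective _).injOn
    · simpa [mul_assoc] using K.mul_mem hy.1 (K.inv_mem hK₀)
    · exact A.mul_mem hy.2 (A.inv_mem hA₀)

theorem mul_ncard_primeOrderCoset_mem_le [Fact p.Prime] [K.Normal] (hK : K.index = p)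
    (hx : x ∉ K) (P : Sylow p G) :
    p * {y | y ∈ primeOrderCoset p K x ∧ y ∈ P}.ncard ≤ Nat.card P := by
  by_cases hle : (P : Subgroup G) ≤ K
  · have hempty : {y | y ∈ primeOrderCoset p K x ∧ y ∈ P} = ∅ :=
      Set.eq_empty_of_forall_notMem fun y hy => notMem_of_mem_primeOrderCoset hx hy.1 (hle hy.2)
    simp [hempty]
  · have hdvd := relIndex_dvd_index_of_normal K (P : Subgroup G)
    have hcard := card_inf_mul_relIndex K (P : Subgroup G)
    rw [hK] at hdvd
    rw [((Nat.dvd_prime Fact.out).mp hdvd).resolve_left (mt relIndex_eq_one.mp hle),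
      mul_comm] at hcard
    have hsub : {y | y ∈ primeOrderCoset p K x ∧ y ∈ P} ⊆
        {y | y * x⁻¹ ∈ K ∧ y ∈ (P : Subgroup G)} := fun y hy => ⟨hy.1.2, hy.2⟩
    rw [← hcard]
    gcongr
    exact (Set.ncard_le_ncard hsub).trans (ncard_coset_inter_le_card_inf K (P : Subgroup G) x)

theorem ncard_primeOrderCoset_isolatedIn_le [Fact p.Prime] {P : Sylow p G}
    (hK : K ≤ pResidual p G) (hP : normalizerIndex P = 1) :
    {y | y ∈ primeOrderCoset p K x ∧ IsolatedIn P y}.ncard ≤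
      Nat.card (⁅(P : Subgroup G), (P : Subgroup G)⁆ : Subgroup G) := by
  rcases Set.eq_empty_or_nonempty {y | y ∈ primeOrderCoset p K x ∧ IsolatedIn P y} with
    hempty | ⟨y₀, hy₀, hisol₀⟩
  · simp [hempty]
  · refine Set.ncard_le_ncard_of_injOn (fun y => y * y₀⁻¹) (fun y ⟨hy, hisol⟩ => ?_)
      (mul_left_injective _).injOn
    exact hisol.mul_inv_mem_commutator hisol₀ (normalizer_le_of_normalizerIndex_eq_one hP)
      (hy.1 ▸ pow_orderOf_eq_one y) (hy₀.1 ▸ pow_orderOf_eq_one y₀)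
      (hK (mul_inv_mem_of_mem_primeOrderCoset hy hy₀))

end PrimeOrderCoset

section IndexThree

variable {G : Type*} [Group G] [Finite G] {K : Subgroup G} [K.Normal] {x : G}

theorem mul_normalizerIndex_lt (P : Sylow 3 G) (hindex : K.index = 3)
    (hX : 47 * Nat.card K < 60 * (primeOrderCoset 3 K x).ncard) :
    47 * (normalizerIndex P * Nat.card P) <
      45 * (3 * {y | y ∈ primeOrderCoset 3 K x ∧ IsolatedIn P y}.ncard +
        {y | y ∈ primeOrderCoset 3 K x ∧ y ∈ P}.ncard) := by
  have : Fact (Nat.Prime 3) := ⟨Nat.prime_three⟩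
  have hcount := succ_mul_ncard_le P
    (conj_mem_primeOrderCoset (x := x) (commutator_le_of_index_eq_prime hindex))
    fun _ hy => isPElement_of_orderOf_eq hy.1
  have hcard := card_eq_card_sylow_mul_card_normalizer P
  rw [card_normalizer_eq, ← card_mul_index K, hindex] at hcard
  refine lt_of_mul_lt_mul_left (a := Nat.card (Sylow 3 G)) ?_ (Nat.zero_le _)
  rw [mul_left_comm, ← hcard, mul_left_comm _ 45]
  omega

theorem normalizerIndex_eq_one_and_card_sylow_eq_three (P : Sylow 3 G) (hindex : K.index = 3)
    (hK : K ≤ pResidual 3 G) (hx : x ∉ K)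
    (hX : 47 * Nat.card K < 60 * (primeOrderCoset 3 K x).ncard) :
    normalizerIndex P = 1 ∧ Nat.card P = 3 := by
  have : Fact (Nat.Prime 3) := ⟨Nat.prime_three⟩
  have hlt := mul_normalizerIndex_lt P hindex hX
  have hmem := mul_ncard_primeOrderCoset_mem_le hindex hx P
  have hisol : {y | y ∈ primeOrderCoset 3 K x ∧ IsolatedIn P y}.ncard ≤
      {y | y ∈ primeOrderCoset 3 K x ∧ y ∈ P}.ncard :=
    Set.ncard_le_ncard fun y hy => ⟨hy.1, hy.2.mem⟩
  have hν : normalizerIndex P = 1 := by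
    have hpos : normalizerIndex P ≠ 0 := index_ne_zero_of_finite
    by_contra hne
    have := Nat.mul_le_mul_right (Nat.card P) (show 2 ≤ normalizerIndex P by omega)
    omega
  rw [hν, one_mul] at hlt
  have hP : (P : Subgroup G) ≠ ⊥ := fun hbot => by
    have : Nat.card P = 1 := card_eq_one.mpr hbot
    omega
  refine ⟨hν, (card_eq_or_sq_le_card hP).resolve_right fun hP₉ => ?_⟩
  have hcomm := ncard_primeOrderCoset_isolatedIn_le (x := x) hK hν
  have hnine := sq_mul_card_commutator_sylow_le hP₉
  omega

theorem isSolvable_of_index_eq_three (hindex : K.index = 3) (hK : K ≤ pResidual 3 G)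
    (hx : x ∉ K) (hX : 47 * Nat.card K < 60 * (primeOrderCoset 3 K x).ncard) :
    Group.IsSolvable K := by
  have : Fact (Nat.Prime 3) := ⟨Nat.prime_three⟩
  let P : Sylow 3 G := default
  obtain ⟨hν, hP⟩ := normalizerIndex_eq_one_and_card_sylow_eq_three P hindex hK hx hX
  have hcard := card_eq_card_sylow_mul_card_normalizer P
  rw [card_normalizer_eq, hν, hP, ← card_mul_index K, hindex] at hcard
  have hlt := mul_normalizerIndex_lt P hindex hX
  have hmem := mul_ncard_primeOrderCoset_mem_le hindex hx P
  rw [hν, hP] at hlt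
  rw [hP] at hmem
  obtain ⟨y, hyX, hy⟩ := (Set.ncard_pos).mp
    (show 0 < {y | y ∈ primeOrderCoset 3 K x ∧ IsolatedIn P y}.ncard by omega)
  have hle := hy.card_sylow_le_ncard hyX
    (conj_mem_primeOrderCoset (commutator_le_of_index_eq_prime hindex))
  have hcoset := ncard_coset_inter_le_card_inf K ⊤ x
  have heq : primeOrderCoset 3 K x = {y | y * x⁻¹ ∈ K ∧ y ∈ (⊤ : Subgroup G)} := by
    refine Set.eq_of_subset_of_ncard_le (fun y hy => ⟨hy.2, mem_top y⟩) (hcoset.trans ?_)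
    rw [inf_top_eq]
    omega
  refine isSolvable_of_forall_mul_pow_three (x := x) fun k hk => ?_
  have hkx : k * x ∈ primeOrderCoset 3 K x := heq ▸ ⟨by simpa using hk, mem_top _⟩
  exact hkx.1 ▸ pow_orderOf_eq_one (k * x)

end IndexThree

section Residual

variable {G : Type*} [Group G]

theorem mem_sup_zpowers_of_mul_inv_mem {K : Subgroup G} {x y : G} (h : y * x⁻¹ ∈ K) :
    y ∈ K ⊔ zpowers x := by
  simpa using mul_mem (mem_sup_left h) (mem_sup_right (mem_zpowers x))

theorem index_subgroupOf_sup_zpowers {p : ℕ} [Fact p.Prime] {K : Subgroup G} [K.Normal] {x : G}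
    (hxp : orderOf x = p) (hx : x ∉ K) : (K.subgroupOf (K ⊔ zpowers x)).index = p := by
  have hdvd : K.relIndex (zpowers x) ∣ p := by
    rw [← hxp, ← Nat.card_zpowers]
    exact relIndex_dvd_card _ _
  have hne : K.relIndex (zpowers x) ≠ 1 := fun h => hx (relIndex_eq_one.mp h (mem_zpowers x))
  change K.relIndex (K ⊔ zpowers x) = p
  rw [relIndex_sup_left]
  exact ((Nat.dvd_prime Fact.out).mp hdvd).resolve_left hne

theorem ncard_primeOrderCoset_le_of_orderOf_eq [Finite G] {p : ℕ} {K : Subgroup G} {x y : G}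
    (hy : y ∈ primeOrderCoset p K x) :
    (primeOrderCoset p K x).ncard ≤ (primeOrderCoset p (K.subgroupOf (K ⊔ zpowers y))
      ⟨y, mem_sup_right (mem_zpowers y)⟩).ncard := by
  refine (Set.ncard_le_ncard fun y' hy' => ?_).trans (Set.ncard_image_le (f := Subtype.val))
  have hmem := mul_inv_mem_of_mem_primeOrderCoset hy' hy
  exact ⟨⟨y', mem_sup_zpowers_of_mul_inv_mem hmem⟩, ⟨by simpa using hy'.1, hmem⟩, rfl⟩

variable [Finite G]

theorem ncard_primeOrderCoset_pResidual_le {x : G} (hns : ¬ Group.IsSolvable (pResidual 3 G))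
    (hx : x ∉ pResidual 3 G) :
    60 * (primeOrderCoset 3 (pResidual 3 G) x).ncard ≤ 47 * Nat.card (pResidual 3 G) := by
  have : Fact (Nat.Prime 3) := ⟨Nat.prime_three⟩
  by_contra! hlt
  obtain ⟨y, hy⟩ := (Set.ncard_pos).mp
    (show 0 < (primeOrderCoset 3 (pResidual 3 G) x).ncard by omega)
  have hyK := notMem_of_mem_primeOrderCoset hx hy
  have hle := ncard_primeOrderCoset_le_of_orderOf_eq hy
  let e := subgroupOfEquivOfLe (le_sup_left : pResidual 3 G ≤ pResidual 3 G ⊔ zpowers y)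
  have hcard := Nat.card_congr e.toEquiv
  have hsolv := isSolvable_of_index_eq_three (x := ⟨y, mem_sup_right (mem_zpowers y)⟩)
    (index_subgroupOf_sup_zpowers hy.1 hyK) (subgroupOf_pResidual_le le_sup_left)
    (mt mem_subgroupOf.mp hyK) (by omega)
  exact hns (Group.isSolvable_of_isSolvable_injective (f := e.symm.toMonoidHom) e.symm.injective)

theorem mul_ncard_notMem_add_le {m l : ℕ} {X : Set G} (K : Subgroup G) [K.Normal]
    (h : ∀ x ∉ K, m * {y | y ∈ X ∧ y * x⁻¹ ∈ K}.ncard ≤ l * Nat.card K) :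
    m * {y | y ∈ X ∧ y ∉ K}.ncard + l * Nat.card K ≤ l * Nat.card G := by
  classical
  have := Fintype.ofFinite G
  have := Fintype.ofFinite (G ⧸ K)
  have hcoset (q : G ⧸ K) (hq : q ∈ Finset.univ.erase 1) :
      m * {y | (y ∈ X ∧ y ∉ K) ∧ (y : G ⧸ K) = q}.ncard ≤ l * Nat.card K := by
    obtain ⟨x, rfl⟩ := QuotientGroup.mk_surjective q
    have hx : x ∉ K := mt (QuotientGroup.eq_one_iff x).mpr (Finset.ne_of_mem_erase hq)
    refine (Nat.mul_le_mul_left m (Set.ncard_le_ncard ?_)).trans (h x hx)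
    rintro y ⟨⟨hyX, -⟩, hyx⟩
    exact ⟨hyX, div_eq_mul_inv y x ▸ QuotientGroup.eq_iff_div_mem.mp hyx⟩
  have hfiber := Finset.card_eq_sum_card_fiberwise (f := fun y : G => (y : G ⧸ K))
    (s := {y : G | y ∈ X ∧ y ∉ K}) (t := Finset.univ.erase 1) fun y hy => by
      simpa using (Finset.mem_filter.mp hy).2.2
  have hcard := card_eq_card_quotient_mul_card_subgroup K
  have herase := Finset.card_erase_add_one (Finset.mem_univ (1 : G ⧸ K))
  rw [Finset.card_univ, ← Nat.card_eq_fintype_card] at herase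
  calc m * {y | y ∈ X ∧ y ∉ K}.ncard + l * Nat.card K
      = ∑ q ∈ Finset.univ.erase (1 : G ⧸ K),
          m * {y | (y ∈ X ∧ y ∉ K) ∧ (y : G ⧸ K) = q}.ncard + l * Nat.card K := by
        rw [← Finset.mul_sum, Set.ncard_eq_toFinset_card', Set.toFinset_ofPred, hfiber]
        simp only [Set.ncard_eq_toFinset_card', Set.toFinset_ofPred, Finset.filter_filter]
    _ ≤ ∑ _ ∈ Finset.univ.erase (1 : G ⧸ K), l * Nat.card K + l * Nat.card K :=
        Nat.add_le_add_right (Finset.sum_le_sum hcoset) _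
    _ = l * Nat.card G := by
        rw [Finset.sum_const, smul_eq_mul, hcard, ← herase]
        ring

theorem weightSum_le_weightSum_pResidual (c : ℤ) :
    weightSum c G ≤ weightSum c (pResidual 3 G) +
      3 * {y : G | orderOf y = 3 ∧ y ∉ pResidual 3 G}.ncard -
      2 * {y | y ∉ pResidual 3 G}.ncard := by
  classical
  have : Fact (Nat.Prime 3) := ⟨Nat.prime_three⟩
  have := Fintype.ofFinite G
  have := Fintype.ofFinite (pResidual 3 G)
  have hK : weightSum c (pResidual 3 G) =
      ∑ y : G, if y ∈ pResidual 3 G then orderWeight c (orderOf y) else 0 := by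
    simp only [weightSum_eq_sum, ← orderOf_coe, ← Finset.sum_filter]
    exact (Finset.sum_subtype _ (by simp) fun y => orderWeight c (orderOf y)).symm
  rw [hK, weightSum_eq_sum, natCast_ncard_setOf_eq_sum, natCast_ncard_setOf_eq_sum,
    Finset.mul_sum, Finset.mul_sum, ← Finset.sum_add_distrib, ← Finset.sum_sub_distrib]
  refine Finset.sum_le_sum fun y _ => ?_
  have hpos := orderOf_pos y
  by_cases hy : y ∈ pResidual 3 G
  · simp [hy]
  · have hdvd := dvd_orderOf_of_notMem_pResidual hy
    unfold orderWeight
    simp only [hy]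
    split_ifs <;> lia

theorem HasSmallOrders.hasSmallOrders_pResidual (h : HasSmallOrders G)
    (hns : ¬ Group.IsSolvable (pResidual 3 G)) : HasSmallOrders (pResidual 3 G) := by
  have hthree : 60 * {y : G | orderOf y = 3 ∧ y ∉ pResidual 3 G}.ncard +
      47 * Nat.card (pResidual 3 G) ≤ 47 * Nat.card G :=
    mul_ncard_notMem_add_le _ fun x => ncard_primeOrderCoset_pResidual_le hns
  have hcompl : Nat.card (pResidual 3 G) + {y | y ∉ pResidual 3 G}.ncard = Nat.card G :=
    Set.ncard_add_ncard_compl (pResidual 3 G : Set G)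
  have htwo := h.two
  have hone := h.one
  have htwo_le := weightSum_le_weightSum_pResidual (G := G) 2
  have hone_le := weightSum_le_weightSum_pResidual (G := G) 1
  constructor <;> omega

theorem HasSmallOrders.isSolvable (h : HasSmallOrders G) : Group.IsSolvable G := by
  have : Fact (Nat.Prime 3) := ⟨Nat.prime_three⟩
  suffices hK : Group.IsSolvable (pResidual 3 G) from
    (Group.isSolvable_iff_subgroup_quotient _).mpr
      ⟨hK, isSolvable_of_isPGroup isPGroup_quotient_pResidual⟩
  by_contra hns
  exact hns ((h.hasSmallOrders_pResidual hns).isSolvable_of_pResidual_eq_top pResidual_pResidual)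

end Residual

section SmallAverage

variable {G : Type*} [Group G] [Fintype G]

theorem weightSum_eq_sub (c : ℤ) :
    weightSum c G = 4 * Nat.card G - (∑ x : G, orderOf x : ℕ) - c * numOrderTwo G := by
  simp only [weightSum_eq_sum, orderWeight, numOrderTwo, Finset.sum_sub_distrib,
    ← Finset.sum_filter, Finset.sum_const, Nat.card_eq_fintype_card]
  simp [mul_comm]

theorem hasSmallOrders_of_sum_orderOf_le (htwo : 99 * numOrderTwo G ≤ 10 * Nat.card G)
    (hsum : 10000 * ∑ x : G, orderOf x ≤ 34479 * Nat.card G) : HasSmallOrders G := by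
  constructor <;> rw [weightSum_eq_sub] <;> omega

end SmallAverage

theorem avgOrder_gt_of_few_involutions' {G : Type*} [Group G] [Fintype G]
    (hns : ¬ IsSolvable G)
    (h : (numOrderTwo G : ℚ) ≤ (10 / 99 : ℚ) * (Fintype.card G : ℚ)) :
    34479 / 10000 < avgOrder G := by
  by_contra hle
  apply hns
  rw [not_lt, avgOrder, div_le_iff₀ (mod_cast Fintype.card_pos)] at hle
  have htwo : (99 : ℚ) * numOrderTwo G ≤ 10 * Nat.card G := by
    rw [Nat.card_eq_fintype_card]
    linarith
  have hsum : (10000 : ℚ) * ∑ x : G, (orderOf x : ℚ) ≤ 34479 * Nat.card G := by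
    rw [Nat.card_eq_fintype_card]
    linarith
  exact (hasSmallOrders_of_sum_orderOf_le (mod_cast htwo) (mod_cast hsum)).isSolvable
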